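/- arXiv:1707.00853 — 2 statements merged into one kernel-verified Lean document; each statement's English description precedes it below -/
import Mathlib

section
/- Let X ⊂ P^4 be a smooth cubic threefold and x ∈ X a point that is not an Eckardt point (i.e. only finitely many lines of X pass through x). Then the lines contained in X passing through x correspond exactly to the intersection points of a plane conic and a plane cubic curve without common components; in particular there are six such lines counted with multiplicity. -/
open Module MvPolynomial

noncomputable section

/-- The point `x = [1,0,0,0,0] ∈ ℙ⁴`. -/
def e₀ : Fin 5 → ℂ := fun i => if i = 0 then 1 else 0

/-- The cubic `F = x₀²x₄ + x₀·Q(x₁,…,x₄) + C(x₁,…,x₄)`, the normal form of a cubic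
threefold through `x = [1,0,0,0,0]` with tangent hyperplane `x₄ = 0` there. -/
def cubicF (Q C : MvPolynomial (Fin 4) ℂ) : MvPolynomial (Fin 5) ℂ :=
  X 0 ^ 2 * X 4 + X 0 * rename Fin.succ Q + rename Fin.succ C

/-- Restriction of a polynomial in `x₁,…,x₄` to the plane `x₄ = 0`. -/
def restrict0 (P : MvPolynomial (Fin 4) ℂ) : MvPolynomial (Fin 3) ℂ :=
  aeval (Fin.snoc (fun i : Fin 3 => (X i : MvPolynomial (Fin 3) ℂ)) 0) P

/-- The lines of `X = V(F)` through the point `x = [1,0,0,0,0]`, as 2-dimensional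
subspaces of `ℂ⁵`. -/
def LinesThrough (F : MvPolynomial (Fin 5) ℂ) : Set (Submodule ℂ (Fin 5 → ℂ)) :=
  {W | finrank ℂ W = 2 ∧ e₀ ∈ W ∧ ∀ v ∈ W, eval v F = 0}

/-- The common zeros in `ℙ²` of the restricted conic `Q(x₁,x₂,x₃,0)` and cubic
`C(x₁,x₂,x₃,0)`, as 1-dimensional subspaces of `ℂ³`. -/
def ConicCubicPts (Q C : MvPolynomial (Fin 4) ℂ) : Set (Submodule ℂ (Fin 3 → ℂ)) :=
  {D | finrank ℂ D = 1 ∧ ∀ a ∈ D, eval a (restrict0 Q) = 0 ∧ eval a (restrict0 C) = 0}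

namespace MvPolynomial

variable {σ K : Type*} [Field K] {f : MvPolynomial σ K} {n : ℕ}

theorem IsHomogeneous.eval_smul_apply (hf : f.IsHomogeneous n) (k : K) (v : σ → K) :
    eval (k • v) f = k ^ n * eval v f := by
  rw [eval_eq, eval_eq, Finset.mul_sum]
  refine Finset.sum_congr rfl fun d hd => ?_
  rw [hf.degree_eq_sum_deg_support hd, ← Finset.prod_pow_eq_pow_sum, mul_left_comm,
    ← Finset.prod_mul_distrib]
  simp [mul_pow]

theorem IsHomogeneous.eval_smul_apply_eq_zero (hf : f.IsHomogeneous n) (k : K) {v : σ → K}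
    (hv : eval v f = 0) : eval (k • v) f = 0 := by
  rw [hf.eval_smul_apply, hv, mul_zero]

/-- The substitution `f ↦ f (T x)`, with values in polynomials in `T`. -/
def scaleVars : MvPolynomial σ K →ₐ[K] Polynomial (MvPolynomial σ K) :=
  aeval (fun i => Polynomial.C (X i) * Polynomial.X)

theorem coeff_coeff_scaleVars (f : MvPolynomial σ K) (k : ℕ) (m : σ →₀ ℕ) :
    coeff m ((scaleVars f).coeff k) = if m.degree = k then coeff m f else 0 := by
  classical
  induction f using MvPolynomial.induction_on' with
  | monomial d r =>
    have : scaleVars (monomial d r) = Polynomial.C (monomial d r) * Polynomial.X ^ d.degree := by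
      rw [scaleVars, aeval_monomial, monomial_eq, map_mul, mul_assoc]
      congr 1
      simp only [Finsupp.prod, mul_pow, Finset.prod_mul_distrib, Finset.prod_pow_eq_pow_sum,
        Finsupp.degree_apply, map_prod, map_pow]
    rw [this, Polynomial.coeff_C_mul_X_pow]
    by_cases h : d = m
    · subst h; simp [eq_comm, apply_ite (coeff d)]
    · simp [h, apply_ite (coeff m)]
  | add p q hp hq =>
    rw [map_add, Polynomial.coeff_add, coeff_add, hp, hq, coeff_add]
    split_ifs <;> simp

theorem IsHomogeneous.exists_of_dvd (hf : f.IsHomogeneous n) (hf0 : f ≠ 0)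
    {d : MvPolynomial σ K} (hd : d ∣ f) : ∃ k, d.IsHomogeneous k := by
  obtain ⟨e, rfl⟩ := hd
  have hscale (g : MvPolynomial σ K) (hg : g ≠ 0) : scaleVars g ≠ 0 := by
    obtain ⟨m, hm⟩ := MvPolynomial.ne_zero_iff.1 hg
    intro h
    have := coeff_coeff_scaleVars g m.degree m
    rw [h] at this
    simp at this
    exact hm this.symm
  have hd0 := hscale d (left_ne_zero_of_mul hf0)
  have he0 := hscale e (right_ne_zero_of_mul hf0)
  have hmono : scaleVars (d * e) = Polynomial.C (d * e) * Polynomial.X ^ n := by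
    ext k m
    rw [coeff_coeff_scaleVars, Polynomial.coeff_C_mul_X_pow, apply_ite (coeff m), coeff_zero]
    by_cases hm : coeff m (d * e) = 0
    · simp [hm]
    · have : m.degree = n := by
        by_contra h
        exact hm (hf.coeff_eq_zero h)
      rw [this]
      simp [eq_comm]
  have h1 : (scaleVars d).natDegree + (scaleVars e).natDegree = n := by
    rw [← Polynomial.natDegree_mul hd0 he0, ← map_mul, hmono,
      Polynomial.natDegree_C_mul_X_pow _ _ hf0]
  have h2 : (scaleVars d).natTrailingDegree + (scaleVars e).natTrailingDegree = n := by
    rw [← Polynomial.natTrailingDegree_mul hd0 he0, ← map_mul, hmono,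
      Polynomial.natTrailingDegree_mul_X_pow (Polynomial.C_ne_zero.2 hf0),
      Polynomial.natTrailingDegree_C, zero_add]
  have h3 := (scaleVars d).natTrailingDegree_le_natDegree
  have h4 := (scaleVars e).natTrailingDegree_le_natDegree
  refine ⟨(scaleVars d).natDegree, fun m hm => ?_⟩
  have hc := coeff_coeff_scaleVars d m.degree m
  rw [if_pos rfl] at hc
  have hk : (scaleVars d).coeff m.degree ≠ 0 := by
    intro h
    rw [h] at hc
    exact hm (by simpa using hc.symm)
  have h5 := Polynomial.le_natDegree_of_ne_zero hk
  have h6 := Polynomial.natTrailingDegree_le_of_ne_zero hk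
  have : m.degree = (scaleVars d).natDegree := by omega
  rw [← this]
  exact (Finsupp.degree_eq_weight_one (R := ℕ) ▸ rfl)

/-- The restriction of `f` to the affine line `t ↦ w + t v`. -/
def lineRestriction (f : MvPolynomial σ K) (w v : σ → K) : Polynomial K :=
  aeval (fun i => Polynomial.C (v i) * Polynomial.X + Polynomial.C (w i)) f

theorem eval_lineRestriction (f : MvPolynomial σ K) (w v : σ → K) (t : K) :
    (f.lineRestriction w v).eval t = eval (w + t • v) f := by
  have h : (Polynomial.aeval t).comp
      (aeval fun i => Polynomial.C (v i) * Polynomial.X + Polynomial.C (w i)) =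
      aeval (w + t • v) := by
    ext i
    simp only [AlgHom.comp_apply, aeval_X, map_add, map_mul, Polynomial.aeval_C,
      Polynomial.aeval_X, Algebra.algebraMap_self_apply, Pi.add_apply, Pi.smul_apply, smul_eq_mul]
    ring
  simpa [lineRestriction, Polynomial.coe_aeval_eq_eval, coe_aeval_eq_eval] using DFunLike.congr_fun h f

theorem IsHomogeneous.natDegree_lineRestriction_le (hf : f.IsHomogeneous n) (w v : σ → K) :
    (f.lineRestriction w v).natDegree ≤ n := by
  simpa [lineRestriction] using aeval_natDegree_le f hf.totalDegree_le
    (fun i => Polynomial.C (v i) * Polynomial.X + Polynomial.C (w i))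
    (fun i => Polynomial.natDegree_linear_le)

/-- A form constant on the affine line `w + t v` vanishes in its direction `v`. -/
theorem IsHomogeneous.eval_eq_zero_of_lineRestriction_eq_C [Infinite K] (hf : f.IsHomogeneous n)
    {w v : σ → K} {k : K} (h : f.lineRestriction w v = Polynomial.C k) (hk : n ≠ 0 ∨ k = 0) :
    eval v f = 0 := by
  have key : f.lineRestriction v w * Polynomial.X =
      Polynomial.C k * Polynomial.X ^ n * Polynomial.X := by
    refine Polynomial.funext fun s => ?_
    rcases eq_or_ne s 0 with rfl | hs
    · simp
    have hvw : v + s • w = s • (w + s⁻¹ • v) := by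
      rw [smul_add, smul_inv_smul₀ hs, add_comm]
    have := congrArg (Polynomial.eval s⁻¹) h
    rw [eval_lineRestriction, Polynomial.eval_C] at this
    simp only [Polynomial.eval_mul, Polynomial.eval_X, Polynomial.eval_C, Polynomial.eval_pow]
    rw [eval_lineRestriction, hvw, hf.eval_smul_apply, this]
    ring
  have := congrArg (Polynomial.eval 0) (mul_right_cancel₀ Polynomial.X_ne_zero key)
  rw [eval_lineRestriction] at this
  rcases hk with hn | rfl
  · simpa [hn] using this
  · simpa using this

end MvPolynomial

theorem Submodule.exists_eq_span_pair {K V : Type*} [Field K] [AddCommGroup V] [Module K V]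
    {H : Submodule K V} (hH : finrank K H = 2) {v : V} (hv : v ∈ H) (hv0 : v ≠ 0) :
    ∃ w ∈ H, w ∉ span K {v} ∧ H = span K {v, w} := by
  have : FiniteDimensional K H := FiniteDimensional.of_finrank_pos (by omega)
  have hle : span K {v} ≤ H := by simpa using hv
  have hne : ∃ w ∈ H, w ∉ span K {v} := by
    by_contra! h
    have := finrank_span_singleton (K := K) hv0
    rw [le_antisymm hle h] at this
    omega
  obtain ⟨w, hw, hwv⟩ := hne
  refine ⟨w, hw, hwv, (Submodule.eq_of_le_of_finrank_le ?_ ?_).symm⟩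
  · rw [span_le]
    rintro x (rfl | rfl)
    exacts [hv, hw]
  · have hli : LinearIndependent K ![v, w] := by
      rw [LinearIndependent.pair_iff' hv0]
      intro a ha
      exact hwv (mem_span_singleton.2 ⟨a, ha⟩)
    have := finrank_span_eq_card hli
    rw [Matrix.range_cons_cons_empty, Fintype.card_fin] at this
    rw [this, hH]

namespace MvPolynomial

variable {σ K : Type*} [Field K] [IsAlgClosed K] {f : MvPolynomial σ K} {n : ℕ}

/-- A form of positive degree has a nontrivial zero on every plane through the origin. -/
theorem IsHomogeneous.exists_mem_ne_zero_eval_eq_zero (hf : f.IsHomogeneous n) (hn : n ≠ 0)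
    {H : Submodule K (σ → K)} (hH : finrank K H = 2) : ∃ u ∈ H, u ≠ 0 ∧ eval u f = 0 := by
  have := IsAlgClosed.instInfinite (K := K)
  have : Nontrivial H := nontrivial_of_finrank_pos (R := K) (by omega)
  obtain ⟨⟨v, hv⟩, hv0⟩ := exists_ne (0 : H)
  replace hv0 : v ≠ 0 := by simpa using hv0
  obtain ⟨w, hw, hwv, -⟩ := Submodule.exists_eq_span_pair hH hv hv0
  by_contra! hno
  refine hno v hv hv0 ?_
  have hdeg : (f.lineRestriction w v).degree = 0 := by
    by_contra h
    obtain ⟨t, ht⟩ := IsAlgClosed.exists_root _ h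
    rw [Polynomial.IsRoot, eval_lineRestriction] at ht
    refine hno _ (H.add_mem hw (H.smul_mem t hv)) (fun h0 => hwv ?_) ht
    rw [eq_neg_of_add_eq_zero_left h0, ← neg_smul]
    exact Submodule.smul_mem _ _ (Submodule.mem_span_singleton_self v)
  exact hf.eval_eq_zero_of_lineRestriction_eq_C
    (Polynomial.eq_C_of_degree_eq_zero hdeg) (Or.inl hn)

/-- A form of degree `n` not vanishing on a plane through the origin has at most `n` zeros there, up
to scaling. -/
theorem IsHomogeneous.exists_finset_of_eval_ne_zero (hf : f.IsHomogeneous n) (hn : n ≠ 0)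
    {H : Submodule K (σ → K)} (hH : finrank K H = 2) {v : σ → K} (hv : v ∈ H)
    (hfv : eval v f ≠ 0) :
    ∃ T : Finset (σ → K), T.card ≤ n ∧
      ∀ u ∈ H, u ≠ 0 → eval u f = 0 → ∃ t ∈ T, ∃ k : K, u = k • t := by
  classical
  have := IsAlgClosed.instInfinite (K := K)
  have hv0 : v ≠ 0 := by
    rintro rfl
    refine hfv ?_
    simpa [hn] using hf.eval_smul_apply 0 0
  obtain ⟨w, -, -, hspan⟩ := Submodule.exists_eq_span_pair hH hv hv0
  have hp0 : f.lineRestriction w v ≠ 0 := fun h =>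
    hfv (hf.eval_eq_zero_of_lineRestriction_eq_C (k := 0) (by simpa using h) (Or.inr rfl))
  refine ⟨(f.lineRestriction w v).roots.toFinset.image (fun t => w + t • v),
    Finset.card_image_le.trans <| (Multiset.toFinset_card_le _).trans <|
      (Polynomial.card_roots' _).trans (hf.natDegree_lineRestriction_le w v), ?_⟩
  intro u hu hu0 hfu
  rw [hspan] at hu
  obtain ⟨a, b, rfl⟩ := Submodule.mem_span_pair.1 hu
  rcases eq_or_ne b 0 with rfl | hb
  · rw [zero_smul, add_zero] at hfu hu0
    rw [hf.eval_smul_apply] at hfu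
    have ha : a ≠ 0 := by rintro rfl; simp at hu0
    exact absurd hfu (mul_ne_zero (pow_ne_zero _ ha) hfv)
  have hu' : a • v + b • w = b • (w + (a / b) • v) := by
    rw [smul_add, smul_smul, mul_div_cancel₀ _ hb, add_comm]
  rw [hu', hf.eval_smul_apply] at hfu
  refine ⟨w + (a / b) • v, ?_, b, hu'⟩
  refine Finset.mem_image_of_mem (fun t => w + t • v) ?_
  rw [Multiset.mem_toFinset, Polynomial.mem_roots hp0, Polynomial.IsRoot, eval_lineRestriction]
  exact (mul_eq_zero.1 hfu).resolve_left (pow_ne_zero _ hb)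

end MvPolynomial

namespace MvPolynomial

variable {σ K : Type*} [Field K]

theorem IsHomogeneous.exists_dual {f : MvPolynomial σ K} (hf : f.IsHomogeneous 1) :
    ∃ l : Dual K (σ → K), ∀ v, l v = eval v f := by
  rw [← mem_homogeneousSubmodule, homogeneousSubmodule_one_eq_span_X] at hf
  induction hf using Submodule.span_induction with
  | mem x hx =>
    obtain ⟨i, rfl⟩ := hx
    exact ⟨LinearMap.proj i, fun v => by simp⟩
  | zero => exact ⟨0, fun v => by simp⟩
  | add x y _ _ hx hy =>
    obtain ⟨l, hl⟩ := hx
    obtain ⟨m, hm⟩ := hy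
    exact ⟨l + m, fun v => by simp [hl, hm]⟩
  | smul a x _ hx =>
    obtain ⟨l, hl⟩ := hx
    exact ⟨a • l, fun v => by simp [hl, smul_eval]⟩

theorem IsHomogeneous.exists_quadraticForm {f : MvPolynomial σ K} (hf : f.IsHomogeneous 2) :
    ∃ q : QuadraticForm K (σ → K), ∀ v, q v = eval v f := by
  rw [← mem_homogeneousSubmodule, ← homogeneousSubmodule_one_pow, pow_two] at hf
  induction hf using Submodule.mul_induction_on' with
  | mem_mul_mem x hx y hy =>
    obtain ⟨l, hl⟩ := IsHomogeneous.exists_dual hx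
    obtain ⟨m, hm⟩ := IsHomogeneous.exists_dual hy
    exact ⟨QuadraticMap.linMulLin l m, fun v => by simp [hl, hm]⟩
  | add x _ y _ hx hy =>
    obtain ⟨p, hp⟩ := hx
    obtain ⟨q, hq⟩ := hy
    exact ⟨p + q, fun v => by simp [hp, hq]⟩

/-- The linear form attached to a functional on `σ → K`. -/
def ofDual [Fintype σ] [DecidableEq σ] (l : Dual K (σ → K)) : MvPolynomial σ K :=
  ∑ i, C (l (Pi.single i 1)) * X i

theorem isHomogeneous_ofDual [Fintype σ] [DecidableEq σ] (l : Dual K (σ → K)) :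
    (ofDual l).IsHomogeneous 1 :=
  IsHomogeneous.sum _ _ _ fun _ _ => isHomogeneous_C_mul_X _ _

theorem eval_ofDual [Fintype σ] [DecidableEq σ] (l : Dual K (σ → K)) (v : σ → K) :
    eval v (ofDual l) = l v := by
  rw [LinearMap.pi_apply_eq_sum_univ l v]
  simp only [ofDual, map_sum, map_mul, eval_C, eval_X, smul_eq_mul]
  refine Finset.sum_congr rfl fun i _ => ?_
  rw [mul_comm]
  congr 2
  ext j
  simp [Pi.single_apply, eq_comm]

/-- A plane conic is a pair of lines or projectively equivalent to `x² + y² + z² = 0`. -/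
theorem IsHomogeneous.eq_mul_or_eq_sum_sq {q : MvPolynomial (Fin 3) ℂ} (hq : q.IsHomogeneous 2) :
    (∃ l m : Dual ℂ (Fin 3 → ℂ), ∀ v, eval v q = l v * m v) ∨
    ∃ e : (Fin 3 → ℂ) ≃ₗ[ℂ] (Fin 3 → ℂ), ∀ v, eval v q = e v 0 ^ 2 + e v 1 ^ 2 + e v 2 ^ 2 := by
  obtain ⟨p, hp⟩ := hq.exists_quadraticForm
  have hdiag := p.equivalent_weightedSumSquares
  rw [finrank_fin_fun] at hdiag
  obtain ⟨w, ⟨e⟩⟩ := hdiag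
  choose r hr using fun i => IsAlgClosed.exists_pow_nat_eq (w i) two_pos
  let y (i : Fin 3) : Dual ℂ (Fin 3 → ℂ) := r i • LinearMap.proj i ∘ₗ e.toLinearEquiv.toLinearMap
  have hy (i : Fin 3) (v : Fin 3 → ℂ) : y i v = r i * e v i := rfl
  have hsum (v : Fin 3 → ℂ) : eval v q = y 0 v ^ 2 + y 1 v ^ 2 + y 2 v ^ 2 := by
    rw [← hp, ← e.map_app, QuadraticMap.weightedSumSquares_apply, Fin.sum_univ_three]
    simp only [hy, mul_pow, hr, smul_eq_mul, ← pow_two]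
  have hfactor (a b : Dual ℂ (Fin 3 → ℂ)) (v : Fin 3 → ℂ) :
      a v ^ 2 + b v ^ 2 = (a + Complex.I • b) v * (a - Complex.I • b) v := by
    simp only [LinearMap.add_apply, LinearMap.sub_apply, LinearMap.smul_apply, smul_eq_mul]
    linear_combination b v ^ 2 * Complex.I_sq
  by_cases h : ∀ i, r i ≠ 0
  · refine Or.inr ⟨e.toLinearEquiv.trans
      (LinearEquiv.piCongrRight fun i => LinearEquiv.smulOfNeZero ℂ ℂ (r i) (h i)), fun v => ?_⟩
    rw [hsum]
    rfl
  · push Not at h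
    obtain ⟨i, hi⟩ := h
    have hyi (v : Fin 3 → ℂ) : y i v = 0 := by rw [hy, hi, zero_mul]
    left
    fin_cases i
    · exact ⟨_, _, fun v => by
        rw [← hfactor (y 1) (y 2) v, hsum, show y 0 v = 0 from hyi v]; ring⟩
    · exact ⟨_, _, fun v => by
        rw [← hfactor (y 0) (y 2) v, hsum, show y 1 v = 0 from hyi v]; ring⟩
    · exact ⟨_, _, fun v => by
        rw [← hfactor (y 0) (y 1) v, hsum, show y 2 v = 0 from hyi v]; ring⟩

/-- The standard parametrization of the conic `x² + y² + z² = 0`. -/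
def conicParam (s : Fin 2 → ℂ) : Fin 3 → ℂ :=
  ![s 0 ^ 2 - s 1 ^ 2, 2 * s 0 * s 1, Complex.I * (s 0 ^ 2 + s 1 ^ 2)]

theorem conicParam_smul (k : ℂ) (s : Fin 2 → ℂ) : conicParam (k • s) = k ^ 2 • conicParam s := by
  ext i
  fin_cases i <;> simp [conicParam] <;> ring

theorem conicParam_ne_zero {s : Fin 2 → ℂ} (hs : s ≠ 0) : conicParam s ≠ 0 := by
  intro h
  have h0 : s 0 ^ 2 - s 1 ^ 2 = 0 := by simpa [conicParam] using congrFun h 0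
  have h2 : s 0 ^ 2 + s 1 ^ 2 = 0 := by simpa [conicParam] using congrFun h 2
  have hs0 : s 0 = 0 := pow_eq_zero_iff two_ne_zero |>.1 (by linear_combination (h0 + h2) / 2)
  have hs1 : s 1 = 0 := pow_eq_zero_iff two_ne_zero |>.1 (by linear_combination (h2 - h0) / 2)
  exact hs (_root_.funext (Fin.forall_fin_two.2 ⟨hs0, hs1⟩))

theorem conicParam_mem_conic (s : Fin 2 → ℂ) :
    conicParam s 0 ^ 2 + conicParam s 1 ^ 2 + conicParam s 2 ^ 2 = 0 := by
  simp only [conicParam, Matrix.cons_val]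
  linear_combination (s 0 ^ 2 + s 1 ^ 2) ^ 2 * Complex.I_sq

theorem exists_conicParam_eq {x : Fin 3 → ℂ} (hx : x 0 ^ 2 + x 1 ^ 2 + x 2 ^ 2 = 0) :
    ∃ s, conicParam s = x := by
  obtain ⟨a, ha⟩ := IsAlgClosed.exists_pow_nat_eq ((x 0 - Complex.I * x 2) / 2) two_pos
  obtain ⟨b, hb⟩ := IsAlgClosed.exists_pow_nat_eq ((-x 0 - Complex.I * x 2) / 2) two_pos
  have hI := Complex.I_sq
  have hab : (2 * a * b) ^ 2 = x 1 ^ 2 := by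
    rw [mul_pow, mul_pow, ha, hb]
    linear_combination x 2 ^ 2 * hI - hx
  have hparam (b : ℂ) (hb : b ^ 2 = (-x 0 - Complex.I * x 2) / 2) (h : 2 * a * b = x 1) :
      conicParam ![a, b] = x := by
    ext i
    fin_cases i
    · simp only [conicParam, Matrix.cons_val, Fin.zero_eta]
      linear_combination ha - hb
    · simpa [conicParam] using h
    · simp only [conicParam, Matrix.cons_val, Fin.reduceFinMk]
      linear_combination Complex.I * (ha + hb) - x 2 * hI
  rcases sq_eq_sq_iff_eq_or_eq_neg.1 hab with h | h
  · exact ⟨_, hparam b hb h⟩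
  · exact ⟨_, hparam (-b) (by rw [neg_sq, hb]) (by linear_combination -h)⟩

/-- Pulling back a form along the parametrization of a smooth conic doubles its degree. -/
theorem IsHomogeneous.exists_pullback_conicParam {f : MvPolynomial (Fin 3) ℂ} {n : ℕ}
    (hf : f.IsHomogeneous n) (e : (Fin 3 → ℂ) →ₗ[ℂ] (Fin 3 → ℂ)) :
    ∃ g : MvPolynomial (Fin 2) ℂ, g.IsHomogeneous (2 * n) ∧
      ∀ s, eval s g = eval (e (conicParam s)) f := by
  let P : Fin 3 → MvPolynomial (Fin 2) ℂ :=
    ![X 0 ^ 2 - X 1 ^ 2, C 2 * (X 0 * X 1), C Complex.I * (X 0 ^ 2 + X 1 ^ 2)]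
  have hP (i) : (P i).IsHomogeneous 2 := by
    have h0 := isHomogeneous_X_pow (R := ℂ) (0 : Fin 2) 2
    have h1 := isHomogeneous_X_pow (R := ℂ) (1 : Fin 2) 2
    fin_cases i
    · exact h0.sub h1
    · exact ((isHomogeneous_X ℂ (0 : Fin 2)).mul (isHomogeneous_X ℂ (1 : Fin 2))).C_mul 2
    · exact (h0.add h1).C_mul _
  have hPs (s : Fin 2 → ℂ) : (fun i => eval s (P i)) = conicParam s := by
    ext i
    fin_cases i <;> simp [P, conicParam, mul_assoc]
  let φ (j : Fin 3) : MvPolynomial (Fin 2) ℂ := MvPolynomial.aeval P (ofDual (LinearMap.proj j ∘ₗ e))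
  refine ⟨MvPolynomial.aeval φ f, hf.aeval φ fun j => ?_, fun s => ?_⟩
  · simpa using (isHomogeneous_ofDual _).aeval P hP
  · have heval {m : ℕ} (g : Fin m → MvPolynomial (Fin 2) ℂ) (p : MvPolynomial (Fin m) ℂ) :
        eval s (MvPolynomial.aeval g p) = eval (fun i => eval s (g i)) p := by
      rw [← coe_aeval_eq_eval, ← coe_aeval_eq_eval]
      exact (comp_aeval_apply (φ := MvPolynomial.aeval s) (f := g) p)
    rw [heval]
    congr 2
    ext j
    rw [heval, hPs, eval_ofDual]
    rfl

/-- A plane conic and a plane cubic with no common zero on some line have at most six common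
zeros, up to scaling. -/
theorem exists_finset_common_zeros {q c : MvPolynomial (Fin 3) ℂ} (hq : q.IsHomogeneous 2)
    (hc : c.IsHomogeneous 3) (hq0 : q ≠ 0) (l : Dual ℂ (Fin 3 → ℂ))
    (hl : ∀ u ≠ 0, eval u q = 0 → eval u c = 0 → l u ≠ 0) :
    ∃ T : Finset (Fin 3 → ℂ), T.card ≤ 6 ∧
      ∀ u ≠ 0, eval u q = 0 → eval u c = 0 → ∃ t ∈ T, ∃ k : ℂ, u = k • t := by
  classical
  rcases hq.eq_mul_or_eq_sum_sq with ⟨m₁, m₂, hm⟩ | ⟨e, he⟩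
  · have hcount (m : Dual ℂ (Fin 3 → ℂ)) (hm0 : m ≠ 0) (hmq : ∀ u, m u = 0 → eval u q = 0) :
        ∃ T : Finset (Fin 3 → ℂ), T.card ≤ 3 ∧
          ∀ u ∈ LinearMap.ker m, u ≠ 0 → eval u c = 0 → ∃ t ∈ T, ∃ k : ℂ, u = k • t := by
      have hker : finrank ℂ (LinearMap.ker m) = 2 := by
        have := Module.Dual.finrank_ker_add_one_of_ne_zero hm0
        rw [finrank_fin_fun] at this
        omega
      obtain ⟨v, hv, hv0, hlv⟩ :=
        (isHomogeneous_ofDual l).exists_mem_ne_zero_eval_eq_zero one_ne_zero hker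
      rw [eval_ofDual] at hlv
      exact hc.exists_finset_of_eval_ne_zero three_ne_zero hker hv
        fun h => hl v hv0 (hmq v hv) h hlv
    have hne : m₁ ≠ 0 ∧ m₂ ≠ 0 := by
      constructor <;> rintro rfl <;>
        exact hq0 (MvPolynomial.funext fun v => by simp [hm])
    obtain ⟨T₁, hT₁, h₁⟩ := hcount m₁ hne.1 fun u hu => by rw [hm, hu, zero_mul]
    obtain ⟨T₂, hT₂, h₂⟩ := hcount m₂ hne.2 fun u hu => by rw [hm, hu, mul_zero]
    refine ⟨T₁ ∪ T₂, (Finset.card_union_le _ _).trans (by omega), fun u hu0 huq huc => ?_⟩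
    rw [hm] at huq
    rcases mul_eq_zero.1 huq with h | h
    · obtain ⟨t, ht, hk⟩ := h₁ u h hu0 huc
      exact ⟨t, Finset.mem_union_left _ ht, hk⟩
    · obtain ⟨t, ht, hk⟩ := h₂ u h hu0 huc
      exact ⟨t, Finset.mem_union_right _ ht, hk⟩
  · have htop : finrank ℂ (⊤ : Submodule ℂ (Fin 2 → ℂ)) = 2 := by simp
    obtain ⟨g, hg, hgc⟩ := hc.exists_pullback_conicParam e.symm.toLinearMap
    obtain ⟨g', hg', hgl⟩ := (isHomogeneous_ofDual l).exists_pullback_conicParam e.symm.toLinearMap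
    obtain ⟨s, -, hs0, hs⟩ := hg'.exists_mem_ne_zero_eval_eq_zero (by norm_num) htop
    have hgs : eval s g ≠ 0 := by
      intro h
      rw [hgl, eval_ofDual] at hs
      rw [hgc] at h
      refine hl _ (by simpa using conicParam_ne_zero hs0) ?_ h hs
      rw [he]
      simpa using conicParam_mem_conic s
    obtain ⟨T, hT, h⟩ :=
      hg.exists_finset_of_eval_ne_zero (by norm_num) htop (Submodule.mem_top (x := s)) hgs
    refine ⟨T.image fun s => e.symm (conicParam s), Finset.card_image_le.trans hT, ?_⟩
    intro u hu0 huq huc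
    rw [he] at huq
    obtain ⟨s, hs⟩ := exists_conicParam_eq huq
    have hus : e.symm (conicParam s) = u := by rw [hs, e.symm_apply_apply]
    have hs0 : s ≠ 0 := by
      rintro rfl
      refine hu0 ?_
      rw [← hus, ← zero_smul ℂ (0 : Fin 2 → ℂ), conicParam_smul]
      simp
    obtain ⟨t, ht, k, rfl⟩ := h s Submodule.mem_top hs0
      (by rw [hgc]; exact (congrArg (fun u => eval u c) hus).trans huc)
    refine ⟨_, Finset.mem_image_of_mem _ ht, k ^ 2, ?_⟩
    rw [← hus, conicParam_smul, map_smul]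

/-- A nonzero functional vanishing at none of finitely many points of the projective plane. -/
theorem exists_dual_forall_common_zero_ne_zero {q c : MvPolynomial (Fin 3) ℂ} {m n : ℕ}
    (hq : q.IsHomogeneous m) (hc : c.IsHomogeneous n)
    (hfin : {D : Submodule ℂ (Fin 3 → ℂ) |
      finrank ℂ D = 1 ∧ ∀ a ∈ D, eval a q = 0 ∧ eval a c = 0}.Finite) :
    ∃ l : Dual ℂ (Fin 3 → ℂ), l ≠ 0 ∧ ∀ u ≠ 0, eval u q = 0 → eval u c = 0 → l u ≠ 0 := by
  set S := {D : Submodule ℂ (Fin 3 → ℂ) |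
    finrank ℂ D = 1 ∧ ∀ a ∈ D, eval a q = 0 ∧ eval a c = 0}
  have : Finite S := hfin
  have hS (D : S) : ∃ v ∈ D.1, v ≠ 0 := by
    refine D.1.exists_mem_ne_zero_of_ne_bot fun h => ?_
    have := D.2.1
    rw [h, finrank_bot] at this
    omega
  choose v hvD hv0 using hS
  obtain ⟨l, hl⟩ := exists_dual_forall_apply_ne_zero (K := ℂ)
    (fun i : Option S => i.elim (Pi.single (0 : Fin 3) (1 : ℂ)) v)
    (by rintro (_ | D); exacts [by simp, hv0 D])
  refine ⟨l, fun h => hl none (by simp [h]), fun u hu0 huq huc hlu => ?_⟩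
  let D : S := ⟨Submodule.span ℂ {u}, finrank_span_singleton hu0, fun a ha => by
    obtain ⟨k, rfl⟩ := Submodule.mem_span_singleton.1 ha
    exact ⟨hq.eval_smul_apply_eq_zero k huq, hc.eval_smul_apply_eq_zero k huc⟩⟩
  obtain ⟨k, hk⟩ := Submodule.mem_span_singleton.1 (hvD D)
  exact hl (some D) (by simp [← hk, hlu])

theorem IsHomogeneous.not_dvd_of_dvd {q c d : MvPolynomial (Fin 3) ℂ} {k : ℕ}
    (hd : d.IsHomogeneous k) (hk : k ≠ 0) {l : Dual ℂ (Fin 3 → ℂ)} (hl0 : l ≠ 0)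
    (hl : ∀ u ≠ 0, eval u q = 0 → eval u c = 0 → l u ≠ 0) (hdq : d ∣ q) : ¬ d ∣ c := by
  intro hdc
  have hker : finrank ℂ (LinearMap.ker l) = 2 := by
    have := Module.Dual.finrank_ker_add_one_of_ne_zero hl0
    rw [finrank_fin_fun] at this
    omega
  obtain ⟨u, hu, hu0, hdu⟩ := hd.exists_mem_ne_zero_eval_eq_zero hk hker
  have hzero {f : MvPolynomial (Fin 3) ℂ} (hf : d ∣ f) : eval u f = 0 := by
    obtain ⟨g, rfl⟩ := hf
    rw [map_mul, hdu, zero_mul]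
  exact hl u hu0 (hzero hdq) (hzero hdc) hu

theorem IsHomogeneous.isUnit_of_dvd_of_dvd {q c d : MvPolynomial (Fin 3) ℂ} {n : ℕ}
    (hq : q.IsHomogeneous n) (hq0 : q ≠ 0) {l : Dual ℂ (Fin 3 → ℂ)} (hl0 : l ≠ 0)
    (hl : ∀ u ≠ 0, eval u q = 0 → eval u c = 0 → l u ≠ 0)
    (hdq : d ∣ q) (hdc : d ∣ c) : IsUnit d := by
  obtain ⟨k, hk⟩ := hq.exists_of_dvd hq0 hdq
  rcases eq_or_ne k 0 with rfl | hk0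
  · have hd := totalDegree_eq_zero_iff_eq_C.1 (Nat.le_zero.1 hk.totalDegree_le)
    have hd0 : coeff 0 d ≠ 0 := by
      intro h
      rw [h, C_0] at hd
      exact hq0 (zero_dvd_iff.1 (hd ▸ hdq))
    rw [hd]
    exact hd0.isUnit.map C
  · exact absurd hdc (hk.not_dvd_of_dvd hk0 hl0 hl hdq)

end MvPolynomial

theorem isHomogeneous_restrict0 {P : MvPolynomial (Fin 4) ℂ} {n : ℕ} (hP : P.IsHomogeneous n) :
    (restrict0 P).IsHomogeneous n := by
  rw [← one_mul n]
  refine hP.aeval _ fun i => ?_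
  induction i using Fin.lastCases with
  | last => rw [Fin.snoc_last]; exact isHomogeneous_zero _ _ _
  | cast i => rw [Fin.snoc_castSucc]; exact isHomogeneous_X ℂ i

/-- The inclusion of the plane `x₀ = x₄ = 0` in `ℂ⁵`. -/
def planeInclusion : (Fin 3 → ℂ) →ₗ[ℂ] (Fin 5 → ℂ) where
  toFun a := ![0, a 0, a 1, a 2, 0]
  map_add' a b := by ext i; fin_cases i <;> simp
  map_smul' k a := by ext i; fin_cases i <;> simp

theorem planeInclusion_apply (a : Fin 3 → ℂ) : planeInclusion a = ![0, a 0, a 1, a 2, 0] := rfl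

theorem planeInclusion_injective : Function.Injective planeInclusion := by
  intro a b h
  ext i
  fin_cases i
  · exact congrFun h 1
  · exact congrFun h 2
  · exact congrFun h 3

theorem eval_restrict0 (P : MvPolynomial (Fin 4) ℂ) (a : Fin 3 → ℂ) :
    eval a (restrict0 P) = eval (planeInclusion a ∘ Fin.succ) P := by
  rw [restrict0, ← coe_aeval_eq_eval, ← coe_aeval_eq_eval]
  refine (comp_aeval_apply (φ := aeval a) (f := _) P).trans ?_
  change aeval _ P = aeval _ P
  congr 2
  ext i
  induction i using Fin.lastCases with
  | last => rw [Fin.snoc_last, map_zero]; rfl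
  | cast i => rw [Fin.snoc_castSucc, aeval_X]; fin_cases i <;> rfl

theorem eval_cubicF (Q C : MvPolynomial (Fin 4) ℂ) (v : Fin 5 → ℂ) :
    eval v (cubicF Q C) =
      v 0 ^ 2 * v 4 + v 0 * eval (v ∘ Fin.succ) Q + eval (v ∘ Fin.succ) C := by
  simp [cubicF, eval_rename]

theorem smul_e₀_add_planeInclusion_comp_succ (t : ℂ) (a : Fin 3 → ℂ) :
    (t • e₀ + planeInclusion a) ∘ Fin.succ = planeInclusion a ∘ Fin.succ := by
  ext i
  simp [e₀]

theorem eval_cubicF_smul_e₀_add (Q C : MvPolynomial (Fin 4) ℂ) (t : ℂ) (a : Fin 3 → ℂ) :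
    eval (t • e₀ + planeInclusion a) (cubicF Q C) =
      t * eval a (restrict0 Q) + eval a (restrict0 C) := by
  rw [eval_cubicF, smul_e₀_add_planeInclusion_comp_succ, eval_restrict0, eval_restrict0]
  simp [e₀, planeInclusion_apply]

theorem apply_four_eq_zero_of_mem_linesThrough {Q C : MvPolynomial (Fin 4) ℂ}
    {W : Submodule ℂ (Fin 5 → ℂ)} (hW : W ∈ LinesThrough (cubicF Q C)) {v : Fin 5 → ℂ}
    (hv : v ∈ W) : v 4 = 0 := by
  have key (t : ℂ) : (v 0 + t) ^ 2 * v 4 + (v 0 + t) * eval (v ∘ Fin.succ) Q +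
      eval (v ∘ Fin.succ) C = 0 := by
    have h := hW.2.2 _ (W.add_mem hv (W.smul_mem t hW.2.1))
    have hsucc : (v + t • e₀) ∘ Fin.succ = v ∘ Fin.succ := by
      ext i
      simp [e₀]
    rw [eval_cubicF, hsucc] at h
    simpa [e₀] using h
  linear_combination (key 1 + key (-1) - 2 * key 0) / 2

/-- The cone over `D` with vertex `[1,0,0,0,0]`. -/
def coneOver (D : Submodule ℂ (Fin 3 → ℂ)) : Submodule ℂ (Fin 5 → ℂ) :=
  Submodule.span ℂ {e₀} ⊔ D.map planeInclusion

theorem mem_coneOver {D : Submodule ℂ (Fin 3 → ℂ)} {v : Fin 5 → ℂ} :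
    v ∈ coneOver D ↔ ∃ t : ℂ, ∃ a ∈ D, t • e₀ + planeInclusion a = v := by
  simp [coneOver, Submodule.mem_sup, Submodule.mem_span_singleton]

theorem comap_coneOver (D : Submodule ℂ (Fin 3 → ℂ)) :
    (coneOver D).comap planeInclusion = D := by
  ext a
  rw [Submodule.mem_comap, mem_coneOver]
  refine ⟨?_, fun ha => ⟨0, a, ha, by simp⟩⟩
  rintro ⟨t, b, hb, h⟩
  have ht : t = 0 := by simpa [e₀, planeInclusion_apply] using congrFun h 0
  rw [ht, zero_smul, zero_add] at h
  exact planeInclusion_injective h ▸ hb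

theorem coneOver_comap {W : Submodule ℂ (Fin 5 → ℂ)} (he : e₀ ∈ W) (hW : ∀ v ∈ W, v 4 = 0) :
    coneOver (W.comap planeInclusion) = W := by
  ext v
  rw [mem_coneOver]
  constructor
  · rintro ⟨t, a, ha, rfl⟩
    exact W.add_mem (W.smul_mem t he) ha
  · intro hv
    have hdecomp : v 0 • e₀ + planeInclusion ![v 1, v 2, v 3] = v := by
      ext i
      fin_cases i <;> simp [e₀, planeInclusion_apply, hW v hv]
    refine ⟨v 0, _, ?_, hdecomp⟩
    rw [Submodule.mem_comap, eq_sub_of_add_eq' hdecomp]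
    exact W.sub_mem hv (W.smul_mem _ he)

theorem finrank_coneOver (D : Submodule ℂ (Fin 3 → ℂ)) :
    finrank ℂ (coneOver D) = finrank ℂ D + 1 := by
  have hinf : Submodule.span ℂ {e₀} ⊓ D.map planeInclusion = ⊥ := by
    rw [Submodule.eq_bot_iff]
    rintro v ⟨h₁, h₂⟩
    obtain ⟨t, rfl⟩ := Submodule.mem_span_singleton.1 h₁
    obtain ⟨a, -, ha⟩ := h₂
    have ht : t = 0 := by simpa [e₀, planeInclusion_apply] using (congrFun ha 0).symm
    rw [ht, zero_smul]
  have he : e₀ ≠ 0 := fun h => by simpa [e₀] using congrFun h 0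
  have := Submodule.finrank_sup_add_finrank_inf_eq (Submodule.span ℂ {e₀}) (D.map planeInclusion)
  rw [hinf, finrank_bot, finrank_span_singleton he,
    ← (Submodule.equivMapOfInjective _ planeInclusion_injective D).finrank_eq] at this
  rw [coneOver]
  omega

theorem coneOver_mem_linesThrough {Q C : MvPolynomial (Fin 4) ℂ}
    {D : Submodule ℂ (Fin 3 → ℂ)} (hD : D ∈ ConicCubicPts Q C) :
    coneOver D ∈ LinesThrough (cubicF Q C) := by
  refine ⟨by rw [finrank_coneOver, hD.1], mem_coneOver.2 ⟨1, 0, D.zero_mem, by simp⟩, ?_⟩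
  intro v hv
  obtain ⟨t, a, ha, rfl⟩ := mem_coneOver.1 hv
  rw [eval_cubicF_smul_e₀_add, (hD.2 a ha).1, (hD.2 a ha).2, mul_zero, add_zero]

theorem comap_mem_conicCubicPts {Q C : MvPolynomial (Fin 4) ℂ}
    {W : Submodule ℂ (Fin 5 → ℂ)} (hW : W ∈ LinesThrough (cubicF Q C)) :
    W.comap planeInclusion ∈ ConicCubicPts Q C := by
  have hcone := coneOver_comap hW.2.1 fun v => apply_four_eq_zero_of_mem_linesThrough hW
  refine ⟨?_, fun a ha => ?_⟩
  · have h := finrank_coneOver (W.comap planeInclusion)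
    rw [hcone, hW.1] at h
    omega
  · have key (t : ℂ) : t * eval a (restrict0 Q) + eval a (restrict0 C) = 0 := by
      rw [← eval_cubicF_smul_e₀_add]
      exact hW.2.2 _ (W.add_mem (W.smul_mem t hW.2.1) ha)
    exact ⟨by linear_combination key 1 - key 0, by linear_combination key 0⟩

/-- Lines through `[1,0,0,0,0]` correspond to their directions in `x₀ = x₄ = 0`. -/
def linesThroughEquiv (Q C : MvPolynomial (Fin 4) ℂ) :
    LinesThrough (cubicF Q C) ≃ ConicCubicPts Q C where
  toFun W := ⟨W.1.comap planeInclusion, comap_mem_conicCubicPts W.2⟩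
  invFun D := ⟨coneOver D.1, coneOver_mem_linesThrough D.2⟩
  left_inv W := Subtype.ext <|
    coneOver_comap W.2.2.1 fun _ => apply_four_eq_zero_of_mem_linesThrough W.2
  right_inv D := Subtype.ext <| comap_coneOver D.1

/-- Let `X = V(F)` be a smooth cubic threefold with `F` in the above normal form at the
non-Eckardt point `x = [1,0,0,0,0]` (non-Eckardt: only finitely many lines of `X` pass
through `x`).  Then the lines of `X` through `x` correspond exactly (via the direction of
the line in `{x₀ = 0, x₄ = 0}`) to the intersection points of the plane conic
`V(Q(x₁,x₂,x₃,0))` and plane cubic `V(C(x₁,x₂,x₃,0))`; these two curves have no common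
component, and in particular there are six such lines counted with multiplicity (so at
most six, and finitely many, set-theoretically). -/
theorem lines_through_point_are_conic_cubic_intersection
    (Q C : MvPolynomial (Fin 4) ℂ)
    (hQ : Q.IsHomogeneous 2) (hC : C.IsHomogeneous 3)
    (hsmooth : ∀ x : Fin 5 → ℂ, x ≠ 0 → eval x (cubicF Q C) = 0 →
      ∃ i, eval x (pderiv i (cubicF Q C)) ≠ 0)
    (hEck : (LinesThrough (cubicF Q C)).Finite) :
    (∃ f : LinesThrough (cubicF Q C) ≃ ConicCubicPts Q C,
      ∀ (W : LinesThrough (cubicF Q C)) (a : Fin 3 → ℂ),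
        a ∈ (f W : Submodule ℂ (Fin 3 → ℂ)) ↔
          (![0, a 0, a 1, a 2, 0] : Fin 5 → ℂ) ∈ (W : Submodule ℂ (Fin 5 → ℂ))) ∧
    restrict0 Q ≠ 0 ∧ restrict0 C ≠ 0 ∧
    (∀ d : MvPolynomial (Fin 3) ℂ, d ∣ restrict0 Q → d ∣ restrict0 C → IsUnit d) ∧
    (ConicCubicPts Q C).Finite ∧ (ConicCubicPts Q C).ncard ≤ 6 := by
  have hq := isHomogeneous_restrict0 hQ
  have hc := isHomogeneous_restrict0 hC
  have hfin : (ConicCubicPts Q C).Finite :=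
    have : Finite (LinesThrough (cubicF Q C)) := hEck
    Finite.of_equiv _ (linesThroughEquiv Q C)
  obtain ⟨l, hl0, hl⟩ := exists_dual_forall_common_zero_ne_zero hq hc hfin
  have hq0 : restrict0 Q ≠ 0 := fun h =>
    hc.not_dvd_of_dvd three_ne_zero hl0 hl (h ▸ dvd_zero _) dvd_rfl
  have hc0 : restrict0 C ≠ 0 := fun h =>
    hq.not_dvd_of_dvd two_ne_zero hl0 hl dvd_rfl (h ▸ dvd_zero _)
  refine ⟨⟨linesThroughEquiv Q C, fun W a => Iff.rfl⟩, hq0, hc0,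
    fun d hdq hdc => hq.isUnit_of_dvd_of_dvd hq0 hl0 hl hdq hdc, hfin, ?_⟩
  classical
  obtain ⟨T, hT, h⟩ := exists_finset_common_zeros hq hc hq0 l hl
  have hsub : ConicCubicPts Q C ⊆ (T.image fun t => Submodule.span ℂ {t} : Finset _) := by
    intro D hD
    obtain ⟨⟨u, huD⟩, hu0, hu⟩ := finrank_eq_one_iff'.1 hD.1
    replace hu0 : u ≠ 0 := by simpa using hu0
    obtain ⟨t, ht, k, rfl⟩ := h u hu0 (hD.2 u huD).1 (hD.2 u huD).2
    have hk : k ≠ 0 := by rintro rfl; simp at hu0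
    refine Finset.mem_coe.2 (Finset.mem_image.2 ⟨t, ht, ?_⟩)
    rw [← Submodule.span_singleton_smul_eq hk.isUnit]
    refine le_antisymm (by simpa using huD) fun v hv => ?_
    obtain ⟨a, ha⟩ := hu ⟨v, hv⟩
    exact Submodule.mem_span_singleton.2 ⟨a, congrArg Subtype.val ha⟩
  calc (ConicCubicPts Q C).ncard ≤ (T.image fun t => Submodule.span ℂ {t}).card := by
        rw [← Set.ncard_coe_finset]
        exact Set.ncard_le_ncard hsub (Finset.finite_toSet _)
    _ ≤ T.card := Finset.card_image_le
    _ ≤ 6 := hT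

end
end

section
/- Let X be a smooth cubic threefold and S its Fano surface of lines. Then every morphism from P^1 to S is constant; equivalently, S contains no rational curves. -/
open Module MvPolynomial

section

open scoped Matrix

theorem exists_eq_smul_of_cross_eq_zero {K : Type*} [Field K] {n w : Fin 3 → K} (hn : n ≠ 0)
    (h : n ⨯₃ w = 0) : ∃ r : K, w = r • n := by
  by_contra! hw
  refine crossProduct_ne_zero_iff_linearIndependent.2 ?_ h
  rw [LinearIndependent.pair_iff' hn]
  exact fun r hr => hw r hr.symm

theorem triple_smul_eq {K : Type*} [CommRing K] (Q A E C : Fin 3 → K) :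
    (E ⬝ᵥ C ⨯₃ A) • Q =
      (Q ⬝ᵥ E) • C ⨯₃ A + (Q ⬝ᵥ C) • A ⨯₃ E + (Q ⬝ᵥ A) • E ⨯₃ C := by
  funext k
  fin_cases k <;> simp [cross_apply, dotProduct, Fin.sum_univ_three] <;> ring

/-- The net of binary quadrics `A x² + E x y + C y²` has no base point. -/
def BasePointFree {K V : Type*} [Field K] [AddCommGroup V] [Module K V] (A E C : V) : Prop :=
  ∀ x y : K, (x ^ 2) • A + (x * y) • E + (y ^ 2) • C = 0 → x = 0 ∧ y = 0

/-- A base point free net of binary quadrics whose coefficient vectors are linearly dependent is a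
pencil, with nonzero resultant. -/
theorem BasePointFree.exists_normal {K : Type*} [Field K] [IsAlgClosed K] {A E C : Fin 3 → K}
    (h : BasePointFree (K := K) A E C) (hD : E ⬝ᵥ C ⨯₃ A = 0) :
    ∃ (n : Fin 3 → K) (ξ η ζ : K), n ≠ 0 ∧ C ⨯₃ A = ξ • n ∧ A ⨯₃ E = η • n ∧ E ⨯₃ C = ζ • n ∧
      ξ ^ 2 - η * ζ ≠ 0 ∧ ζ • A + ξ • E + η • C = 0 := by
  have hA : A ≠ 0 := by
    rintro rfl
    simpa using h 1 0
  obtain ⟨n, hn, hM⟩ := Matrix.exists_mulVec_eq_zero_iff.2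
    (show Matrix.det ![E, C, A] = 0 by rw [← triple_product_eq_det, hD])
  have hE : E ⬝ᵥ n = 0 := congrFun hM 0
  have hC : C ⬝ᵥ n = 0 := congrFun hM 1
  have hA' : A ⬝ᵥ n = 0 := congrFun hM 2
  have key : ∀ u v : Fin 3 → K, u ⬝ᵥ n = 0 → v ⬝ᵥ n = 0 → ∃ r : K, u ⨯₃ v = r • n := by
    intro u v hu hv
    apply exists_eq_smul_of_cross_eq_zero hn
    rw [cross_cross_eq_smul_sub_smul', dotProduct_comm n v, hv, hu]
    simp
  obtain ⟨ξ, hξ⟩ := key C A hC hA'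
  obtain ⟨η, hη⟩ := key A E hA' hE
  obtain ⟨ζ, hζ⟩ := key E C hE hC
  have hrel : ζ • A + ξ • E + η • C = 0 := by
    have hcof : ∀ k m, (E ⨯₃ C) k * A m + (C ⨯₃ A) k * E m + (A ⨯₃ E) k * C m = 0 := by
      intro k m
      have : (E ⨯₃ C) k * A m + (C ⨯₃ A) k * E m + (A ⨯₃ E) k * C m
          = if k = m then E ⬝ᵥ C ⨯₃ A else 0 := by
        fin_cases k <;> fin_cases m <;> simp [cross_apply, dotProduct, Fin.sum_univ_three] <;> ring
      rw [this, hD, ite_self]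
    obtain ⟨k, hk⟩ := Function.ne_iff.1 hn
    funext m
    have := hcof k m
    rw [hξ, hη, hζ] at this
    simp only [Pi.smul_apply, smul_eq_mul, Pi.add_apply, Pi.zero_apply] at this hk ⊢
    refine (mul_eq_zero.1 (?_ : n k * _ = 0)).resolve_left hk
    linear_combination this
  refine ⟨n, ξ, η, ζ, hn, hξ, hη, hζ, fun hres => ?_, hrel⟩
  have hζ0 : ζ = 0 := by
    refine (h ζ ξ ?_).1
    rw [show ξ ^ 2 = ζ * η by linear_combination hres, pow_two, mul_smul, mul_smul, mul_smul,
      ← smul_add, ← smul_add, hrel, smul_zero]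
  have hξ0 : ξ = 0 := by simpa [hζ0] using hres
  have hη0 : η = 0 := by
    by_contra hη0
    have : C = 0 := by simpa [hζ0, hξ0, hη0] using hrel
    simpa [this] using h 0 1
  obtain ⟨c, hc⟩ := exists_eq_smul_of_cross_eq_zero (w := C) hA
    (by rw [← cross_anticomm, hξ, hξ0]; simp)
  obtain ⟨e, he⟩ := exists_eq_smul_of_cross_eq_zero (w := E) hA (by rw [hη, hη0]; simp)
  obtain ⟨x, hx⟩ := IsAlgClosed.exists_root (Polynomial.X ^ 2 + Polynomial.C e * Polynomial.X
    + Polynomial.C c) (by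
      rw [show (Polynomial.X ^ 2 + Polynomial.C e * Polynomial.X + Polynomial.C c :
        Polynomial K).degree = 2 by compute_degree!]; decide)
  refine one_ne_zero (h x 1 ?_).2
  rw [hc, he, smul_smul, smul_smul, ← add_smul, ← add_smul]
  have : x ^ 2 + e * x + c = 0 := by simpa using hx
  rw [show x ^ 2 + x * 1 * e + 1 ^ 2 * c = 0 by linear_combination this, zero_smul]

theorem BasePointFree.eq_zero_of_cross {K : Type*} [Field K] [IsAlgClosed K] {A E C : Fin 3 → K}
    (h : BasePointFree (K := K) A E C) {l m : K} (h₁ : l • C ⨯₃ A + m • A ⨯₃ E = 0)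
    (h₂ : l • E ⨯₃ C + m • C ⨯₃ A = 0) : l = 0 ∧ m = 0 := by
  by_cases hD : E ⬝ᵥ C ⨯₃ A = 0
  · obtain ⟨n, ξ, η, ζ, hn, hξ, hη, hζ, hres, -⟩ := h.exists_normal hD
    rw [hξ, hη, smul_smul, smul_smul, ← add_smul, smul_eq_zero_iff_left hn] at h₁
    rw [hξ, hζ, smul_smul, smul_smul, ← add_smul, smul_eq_zero_iff_left hn] at h₂
    constructor
    · refine (mul_eq_zero.1 (?_ : _ * l = 0)).resolve_left hres
      linear_combination ξ * h₁ - η * h₂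
    · refine (mul_eq_zero.1 (?_ : _ * m = 0)).resolve_left hres
      linear_combination ξ * h₂ - ζ * h₁
  · constructor
    · simpa [dotProduct_add, hD] using congrArg (E ⬝ᵥ ·) h₁
    · have hD' : C ⬝ᵥ A ⨯₃ E ≠ 0 := by rwa [← triple_product_permutation]
      simpa [dotProduct_add, hD'] using congrArg (C ⬝ᵥ ·) h₁

theorem BasePointFree.exists_cross {K : Type*} [Field K] [IsAlgClosed K] {A E C P R : Fin 3 → K}
    (h : BasePointFree (K := K) A E C) (h₀ : P ⬝ᵥ A = 0) (h₁ : P ⬝ᵥ E + R ⬝ᵥ A = 0)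
    (h₂ : P ⬝ᵥ C + R ⬝ᵥ E = 0) (h₃ : R ⬝ᵥ C = 0) :
    ∃ l m : K, P = l • C ⨯₃ A + m • A ⨯₃ E ∧ R = -(l • E ⨯₃ C + m • C ⨯₃ A) := by
  by_cases hD : E ⬝ᵥ C ⨯₃ A = 0
  · obtain ⟨n, ξ, η, ζ, hn, hξ, hη, hζ, hres, hrel⟩ := h.exists_normal hD
    have hP := congrArg (P ⬝ᵥ ·) hrel
    have hR := congrArg (R ⬝ᵥ ·) hrel
    simp only [dotProduct_add, dotProduct_smul, smul_eq_mul, dotProduct_zero] at hP hR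
    have hPE : P ⬝ᵥ E = 0 := by
      refine (mul_eq_zero.1 (?_ : _ * (P ⬝ᵥ E) = 0)).resolve_left hres
      linear_combination ξ * hP + η * hR - (ξ * ζ) * h₀ - η * ζ * h₁ - η * ξ * h₂ - η ^ 2 * h₃
    have hPC : P ⬝ᵥ C = 0 := by
      refine (mul_eq_zero.1 (?_ : _ * (P ⬝ᵥ C) = 0)).resolve_left hres
      linear_combination -ζ * hP - ξ * hR + ζ ^ 2 * h₀ + ξ * ζ * h₁ + ξ ^ 2 * h₂ + ξ * η * h₃
    have hRA : R ⬝ᵥ A = 0 := by linear_combination h₁ - hPE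
    have hRE : R ⬝ᵥ E = 0 := by linear_combination h₂ - hPC
    have key : ∀ Q : Fin 3 → K, Q ⬝ᵥ A = 0 → Q ⬝ᵥ E = 0 → Q ⬝ᵥ C = 0 → ∃ r : K, Q = r • n := by
      intro Q hA hE hC
      apply exists_eq_smul_of_cross_eq_zero hn
      have h1 : ξ • n ⨯₃ Q = 0 := by
        rw [← LinearMap.map_smul₂, ← hξ, cross_cross_eq_smul_sub_smul, dotProduct_comm C,
          dotProduct_comm A, hA, hC]
        simp
      have h2 : η • n ⨯₃ Q = 0 := by
        rw [← LinearMap.map_smul₂, ← hη, cross_cross_eq_smul_sub_smul, dotProduct_comm A,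
          dotProduct_comm E, hA, hE]
        simp
      rcases smul_eq_zero.1 h1 with h1 | h1
      · rcases smul_eq_zero.1 h2 with h2 | h2
        · simp [h1, h2] at hres
        · exact h2
      · exact h1
    obtain ⟨p, rfl⟩ := key P h₀ hPE hPC
    obtain ⟨r, rfl⟩ := key R hRA hRE h₃
    refine ⟨(p * ξ + η * r) / (ξ ^ 2 - η * ζ), -(p * ζ + r * ξ) / (ξ ^ 2 - η * ζ), ?_, ?_⟩
    · rw [hξ, hη, smul_smul, smul_smul, ← add_smul]
      congr 1
      field_simp
      ring
    · rw [hξ, hζ, smul_smul, smul_smul, ← add_smul, ← neg_smul]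
      congr 1
      field_simp
      ring
  · have hE : R ⬝ᵥ E = -(P ⬝ᵥ C) := by linear_combination h₂
    have hA : R ⬝ᵥ A = -(P ⬝ᵥ E) := by linear_combination h₁
    refine ⟨P ⬝ᵥ E / (E ⬝ᵥ C ⨯₃ A), P ⬝ᵥ C / (E ⬝ᵥ C ⨯₃ A), ?_, ?_⟩
    · apply smul_right_injective _ hD
      simp only [triple_smul_eq P, h₀, smul_add, smul_smul, mul_div_cancel₀ _ hD]
      simp
    · apply smul_right_injective _ hD
      simp only [triple_smul_eq R, h₃, hE, hA, smul_add, smul_neg, smul_smul, mul_div_cancel₀ _ hD]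
      module

theorem det_frame_coordinates {R : Type*} [CommRing R]
    (p₀ p₁ p₂ p₃ p₄ u₀ u₁ u₂ u₃ u₄ v₀ v₁ v₂ v₃ v₄ : R) :
    Matrix.det !![p₀, p₃, p₄, p₁, p₂; 0, 1, 0, 0, 0; 0, 0, 1, 0, 0; u₀, u₃, u₄, u₁, u₂;
      v₀, v₃, v₄, v₁, v₂] = Matrix.det !![p₀, p₁, p₂; u₀, u₁, u₂; v₀, v₁, v₂] := by
  rw [Matrix.det_succ_row _ 1, Fin.sum_univ_five]
  simp only [Matrix.of_apply, Matrix.cons_val, mul_zero, zero_mul, zero_add, add_zero]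
  rw [Matrix.det_succ_row _ 1, Fin.sum_univ_four]
  simp [Matrix.det_fin_three, Fin.succAbove, Fin.lt_def]

/-- The alternating form `A ∧ B` evaluated on two vectors. -/
def wedge {R ι : Type*} [CommRing R] [Fintype ι] (A B u v : ι → R) : R :=
  (A ⬝ᵥ u) * (B ⬝ᵥ v) - (A ⬝ᵥ v) * (B ⬝ᵥ u)

theorem exists_frame {K : Type*} [Field K] {a b : Fin 5 → K} (hab : LinearIndependent K ![a, b]) :
    ∃ (δ : K) (π : (Fin 5 → K) →ₗ[K] (Fin 3 → K)) (σ : (Fin 3 → K) →ₗ[K] (Fin 5 → K)),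
      δ ≠ 0 ∧ (∀ w, π (σ w) = w) ∧ (∀ v, ∃ x y : K, v = x • a + y • b + σ (π v)) ∧
      ∀ p u v, Matrix.det ![p, a, b, u, v] = δ * (π p ⬝ᵥ π u ⨯₃ π v) := by
  obtain ⟨β, hβa, hβb⟩ : ∃ β : Basis (Fin 2 ⊕ Fin 3) K (Fin 5 → K),
      β (Sum.inl 0) = a ∧ β (Sum.inl 1) = b := by
    have : Fintype (Basis.sumExtendIndex hab) := by
      have := Module.Finite.finite_basis (Basis.sumExtend hab)
      have : Finite (Basis.sumExtendIndex hab) := Finite.sum_right (Fin 2)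
      exact Fintype.ofFinite _
    have hc : Fintype.card (Basis.sumExtendIndex hab) = 3 := by
      have := Module.finrank_eq_card_basis (Basis.sumExtend hab)
      rw [Module.finrank_fin_fun, Fintype.card_sum, Fintype.card_fin] at this
      omega
    refine ⟨(Basis.sumExtend hab).reindex
      (Equiv.sumCongr (Equiv.refl _) (Fintype.equivFinOfCardEq hc)), ?_, ?_⟩
    · simp [Basis.sumExtend]
      rfl
    · simp [Basis.sumExtend]
      rfl
  have hdec : ∀ v : Fin 5 → K, v = (β.repr v (Sum.inl 0)) • a + (β.repr v (Sum.inl 1)) • b +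
      ∑ k, β.repr v (Sum.inr k) • β (Sum.inr k) := by
    intro v
    have := β.sum_repr v
    rw [Fintype.sum_sum_type, Fin.sum_univ_two, hβa, hβb] at this
    exact this.symm
  let T : Matrix (Fin 5) (Fin 5) K := ![β (Sum.inr 0), a, b, β (Sum.inr 1), β (Sum.inr 2)]
  have hT : T.det ≠ 0 := by
    intro h0
    obtain ⟨w, hw, hw0⟩ := Matrix.exists_vecMul_eq_zero_iff.2 h0
    have := Fintype.linearIndependent_iff.1 β.linearIndependent
      (Sum.elim ![w 1, w 2] ![w 0, w 3, w 4]) (by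
        rw [← hw0]
        funext j
        simp [T, Matrix.vecMul, dotProduct, Fin.sum_univ_five, Fintype.sum_sum_type,
          Fin.sum_univ_three, hβa, hβb]
        ring)
    apply hw
    funext i
    fin_cases i
    · exact this (Sum.inr 0)
    · exact this (Sum.inl 0)
    · exact this (Sum.inl 1)
    · exact this (Sum.inr 1)
    · exact this (Sum.inr 2)
  let π : (Fin 5 → K) →ₗ[K] (Fin 3 → K) := LinearMap.pi fun k => β.coord (Sum.inr k)
  refine ⟨T.det, π, Fintype.linearCombination K fun k => β (Sum.inr k), hT, ?_, ?_, ?_⟩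
  · intro w
    funext k
    simp [π, Fintype.linearCombination_apply, Finsupp.single_apply]
  · intro v
    exact ⟨_, _, by simpa [π, Fintype.linearCombination_apply] using hdec v⟩
  · intro p u v
    let N : Matrix (Fin 5) (Fin 5) K :=
      !![π p 0, β.repr p (Sum.inl 0), β.repr p (Sum.inl 1), π p 1, π p 2;
        0, 1, 0, 0, 0; 0, 0, 1, 0, 0;
        π u 0, β.repr u (Sum.inl 0), β.repr u (Sum.inl 1), π u 1, π u 2;
        π v 0, β.repr v (Sum.inl 0), β.repr v (Sum.inl 1), π v 1, π v 2]
    have hrow : ∀ (q : Fin 5 → K) j, q j = π q 0 * β (Sum.inr 0) j + β.repr q (Sum.inl 0) * a j +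
        β.repr q (Sum.inl 1) * b j + π q 1 * β (Sum.inr 1) j + π q 2 * β (Sum.inr 2) j := by
      intro q j
      conv_lhs => rw [hdec q]
      simp [π, Fin.sum_univ_three]
      ring
    have hM : (![p, a, b, u, v] : Matrix (Fin 5) (Fin 5) K) = N * T := by
      funext i j
      rw [Matrix.mul_apply, Fin.sum_univ_five]
      fin_cases i
      · exact hrow p j
      · simp [N, T]
      · simp [N, T]
      · exact hrow u j
      · exact hrow v j
    have hN : N.det = π p ⬝ᵥ π u ⨯₃ π v := by
      rw [det_frame_coordinates, Matrix.det_fin_three]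
      simp [cross_apply, dotProduct, Fin.sum_univ_three]
      ring
    rw [hM, Matrix.det_mul, hN, mul_comm]

theorem eq_of_forall_dot_cross {K : Type*} [CommRing K] {w w' : Fin 3 → K}
    (h : ∀ u v : Fin 3 → K, w ⬝ᵥ u ⨯₃ v = w' ⬝ᵥ u ⨯₃ v) : w = w' := by
  funext k
  fin_cases k
  · simpa [cross_apply, dotProduct, Fin.sum_univ_three] using h ![0, 1, 0] ![0, 0, 1]
  · simpa [cross_apply, dotProduct, Fin.sum_univ_three] using h ![0, 0, 1] ![1, 0, 0]
  · simpa [cross_apply, dotProduct, Fin.sum_univ_three] using h ![1, 0, 0] ![0, 1, 0]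

/-- Conormal data along the line spanned by `a` and `b`: the gradient of a cubic on that line is
`A x² + E x y + C y²`, it vanishes on the line, and it has no zero on the line. -/
structure IsConormal {K : Type*} [Field K] (a b A E C : Fin 5 → K) : Prop where
  linearIndependent : LinearIndependent K ![a, b]
  basePointFree : BasePointFree (K := K) A E C
  Aa : A ⬝ᵥ a = 0
  Ab : A ⬝ᵥ b = 0
  Ea : E ⬝ᵥ a = 0
  Eb : E ⬝ᵥ b = 0
  Ca : C ⬝ᵥ a = 0
  Cb : C ⬝ᵥ b = 0

/-- The first order deformation `a ↦ P`, `b ↦ R` of the line spanned by `a` and `b` corresponds to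
the vector with coordinates `l`, `m` under the tangent bundle isomorphism. -/
def IsTangentCoord {K : Type*} [Field K] (a b A E C P R : Fin 5 → K) (l m : K) : Prop :=
  ∀ u v, Matrix.det ![P, a, b, u, v] = l * wedge C A u v + m * wedge A E u v ∧
    Matrix.det ![R, a, b, u, v] = -(l * wedge E C u v + m * wedge C A u v)

/-- Linear forms vanishing on `a` and `b`, seen as forms on the quotient. -/
theorem IsConormal.exists_frame {K : Type*} [Field K] {a b A E C : Fin 5 → K}
    (h : IsConormal a b A E C) :
    ∃ (δ : K) (π : (Fin 5 → K) →ₗ[K] (Fin 3 → K)) (σ : (Fin 3 → K) →ₗ[K] (Fin 5 → K))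
      (A' E' C' : Fin 3 → K), δ ≠ 0 ∧ (∀ w, π (σ w) = w) ∧
      (∀ p u v, Matrix.det ![p, a, b, u, v] = δ * (π p ⬝ᵥ π u ⨯₃ π v)) ∧
      BasePointFree (K := K) A' E' C' ∧
      (∀ v, A ⬝ᵥ v = A' ⬝ᵥ π v) ∧ (∀ v, E ⬝ᵥ v = E' ⬝ᵥ π v) ∧ (∀ v, C ⬝ᵥ v = C' ⬝ᵥ π v) := by
  obtain ⟨δ, π, σ, hδ, hσ, hdec, hdet⟩ := _root_.exists_frame h.linearIndependent
  let q : (Fin 5 → K) → (Fin 3 → K) := fun A k => A ⬝ᵥ σ (Pi.single k 1)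
  have hq : ∀ B w, B ⬝ᵥ σ w = q B ⬝ᵥ w := by
    intro B w
    conv_lhs => rw [pi_eq_sum_univ' w]
    rw [map_sum, dotProduct_sum, dotProduct_comm]
    exact Finset.sum_congr rfl fun k _ => by rw [map_smul, dotProduct_smul, smul_eq_mul]
  have hpull : ∀ B : Fin 5 → K, B ⬝ᵥ a = 0 → B ⬝ᵥ b = 0 → ∀ v, B ⬝ᵥ v = q B ⬝ᵥ π v := by
    intro B ha hb v
    obtain ⟨x, y, hv⟩ := hdec v
    conv_lhs => rw [hv]
    simp [dotProduct_add, ha, hb, hq]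
  have hA := hpull A h.Aa h.Ab
  have hE := hpull E h.Ea h.Eb
  have hC := hpull C h.Ca h.Cb
  refine ⟨δ, π, σ, q A, q E, q C, hδ, hσ, hdet, fun x y hxy => h.basePointFree x y ?_, hA, hE, hC⟩
  refine dotProduct_eq_zero _ fun v => ?_
  have := congrArg (· ⬝ᵥ π v) hxy
  simpa [add_dotProduct, hA, hE, hC] using this

theorem IsConormal.eq_zero {K : Type*} [Field K] [IsAlgClosed K] {a b A E C : Fin 5 → K}
    (h : IsConormal a b A E C) {l m : K}
    (h₁ : ∀ u v, l * wedge C A u v + m * wedge A E u v = 0)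
    (h₂ : ∀ u v, l * wedge E C u v + m * wedge C A u v = 0) : l = 0 ∧ m = 0 := by
  obtain ⟨δ, π, σ, A', E', C', hδ, hσ, hdet, hbpf, hA, hE, hC⟩ := h.exists_frame
  apply hbpf.eq_zero_of_cross
  · refine eq_of_forall_dot_cross fun u v => ?_
    simpa [wedge, hA, hE, hC, hσ, add_dotProduct, cross_dot_cross] using h₁ (σ u) (σ v)
  · refine eq_of_forall_dot_cross fun u v => ?_
    simpa [wedge, hA, hE, hC, hσ, add_dotProduct, cross_dot_cross] using h₂ (σ u) (σ v)

theorem IsConormal.exists_isTangentCoord {K : Type*} [Field K] [IsAlgClosed K]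
    {a b A E C P R : Fin 5 → K} (h : IsConormal a b A E C) (h₀ : A ⬝ᵥ P = 0)
    (h₁ : E ⬝ᵥ P + A ⬝ᵥ R = 0) (h₂ : C ⬝ᵥ P + E ⬝ᵥ R = 0) (h₃ : C ⬝ᵥ R = 0) :
    ∃ l m, IsTangentCoord a b A E C P R l m := by
  obtain ⟨δ, π, σ, A', E', C', hδ, hσ, hdet, hbpf, hA, hE, hC⟩ := h.exists_frame
  rw [hA] at h₀
  rw [hA, hE] at h₁
  rw [hE, hC] at h₂
  rw [hC] at h₃
  obtain ⟨l, m, hP, hR⟩ := hbpf.exists_cross (P := π P) (R := π R)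
    (by rw [dotProduct_comm, h₀]) (by rw [dotProduct_comm, dotProduct_comm (π R), h₁])
    (by rw [dotProduct_comm, dotProduct_comm (π R), h₂]) (by rw [dotProduct_comm, h₃])
  refine ⟨δ * l, δ * m, fun u v => ⟨?_, ?_⟩⟩
  · rw [hdet, hP]
    simp only [wedge, hA, hE, hC, add_dotProduct, smul_dotProduct, cross_dot_cross, smul_eq_mul]
    ring
  · rw [hdet, hR]
    simp only [wedge, hA, hE, hC, add_dotProduct, smul_dotProduct, cross_dot_cross, smul_eq_mul,
      neg_dotProduct]
    ring

theorem IsConormal.tangentCoord_unique {K : Type*} [Field K] [IsAlgClosed K]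
    {a b A E C P R : Fin 5 → K} (h : IsConormal a b A E C) {l m l' m' : K}
    (h₁ : IsTangentCoord a b A E C P R l m) (h₂ : IsTangentCoord a b A E C P R l' m') :
    l = l' ∧ m = m' := by
  have := h.eq_zero (l := l - l') (m := m - m')
    (fun u v => by linear_combination (h₂ u v).1 - (h₁ u v).1)
    (fun u v => by linear_combination (h₁ u v).2 - (h₂ u v).2)
  exact ⟨sub_eq_zero.1 this.1, sub_eq_zero.1 this.2⟩

theorem IsTangentCoord.rescale {K : Type*} [Field K] {a b A E C P R : Fin 5 → K} {l m l' m' : K}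
    (h : IsTangentCoord a b A E C P R l m) {x y k r s : K} (hl : y * l' = k * l)
    (hm : x * m' = k * m) :
    IsTangentCoord (x • a) (y • b) (x ^ 2 • A) ((x * y) • E) (y ^ 2 • C)
      ((k * x) • P + r • a) ((k * y) • R + s • b) l' m' := by
  have hdet : ∀ (Q u v : Fin 5 → K) (c r s : K),
      Matrix.det ![c • Q + r • a + s • b, x • a, y • b, u, v] =
        c * x * y * Matrix.det ![Q, a, b, u, v] := by
    intro Q u v c r s
    let N : Matrix (Fin 5) (Fin 5) K :=
      !![c, r, s, 0, 0; 0, x, 0, 0, 0; 0, 0, y, 0, 0; 0, 0, 0, 1, 0; 0, 0, 0, 0, 1]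
    have hN : N.det = c * x * y := by
      rw [Matrix.det_of_isUpperTriangular, Fin.prod_univ_five]
      · simp [N]
      · intro i j hij
        fin_cases i <;> fin_cases j <;> first | rfl | exact absurd hij (by decide)
    let M : Matrix (Fin 5) (Fin 5) K := ![Q, a, b, u, v]
    have hM : (![c • Q + r • a + s • b, x • a, y • b, u, v] : Matrix (Fin 5) (Fin 5) K) =
        N * M := by
      funext i j
      rw [Matrix.mul_apply, Fin.sum_univ_five]
      fin_cases i <;> simp [N, M]
    rw [hM, Matrix.det_mul, hN]
  intro u v
  have hP := hdet P u v (k * x) r 0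
  have hR := hdet R u v (k * y) 0 s
  rw [zero_smul, add_zero] at hP hR
  rw [hP, hR, (h u v).1, (h u v).2]
  simp only [wedge, smul_dotProduct, smul_eq_mul]
  constructor
  · linear_combination (-(x ^ 2 * y) * (C ⬝ᵥ u * A ⬝ᵥ v - C ⬝ᵥ v * A ⬝ᵥ u)) * hl
      - (x ^ 2 * y) * (A ⬝ᵥ u * E ⬝ᵥ v - A ⬝ᵥ v * E ⬝ᵥ u) * hm
  · linear_combination (x * y ^ 2) * (E ⬝ᵥ u * C ⬝ᵥ v - E ⬝ᵥ v * C ⬝ᵥ u) * hl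
      + (x * y ^ 2) * (C ⬝ᵥ u * A ⬝ᵥ v - C ⬝ᵥ v * A ⬝ᵥ u) * hm

theorem exists_eq_of_det_eq_zero {K : Type*} [Field K] {a b P : Fin 5 → K}
    (hab : LinearIndependent K ![a, b]) (h : ∀ u v, Matrix.det ![P, a, b, u, v] = 0) :
    ∃ x y : K, P = x • a + y • b := by
  obtain ⟨δ, π, σ, hδ, hσ, hdec, hdet⟩ := exists_frame hab
  have hP : π P = 0 := eq_of_forall_dot_cross fun u v => by
    simpa [hdet, hδ, hσ] using h (σ u) (σ v)
  obtain ⟨x, y, hxy⟩ := hdec P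
  exact ⟨x, y, by simpa [hP] using hxy⟩

theorem exists_polynomial_of_mul_eq {K ι : Type*} [Field K] [IsAlgClosed K]
    {m n : ι → Polynomial K} {f : K → K} (hf : ∀ i z, (m i).eval z * f z = (n i).eval z)
    (hm : ∀ z, ∃ i, (m i).eval z ≠ 0) : ∃ p : Polynomial K, ∀ z, f z = p.eval z := by
  have htop : Ideal.span (Set.range m) = ⊤ := by
    obtain ⟨g, hg⟩ := IsPrincipalIdealRing.principal (Ideal.span (Set.range m))
    rw [hg, Ideal.submodule_span_eq, Ideal.span_singleton_eq_top]
    by_contra hu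
    have hroot : ∃ z, g.eval z = 0 := by
      by_cases h0 : g = 0
      · exact ⟨0, by simp [h0]⟩
      · exact IsAlgClosed.exists_root g
          fun hd => hu (Polynomial.isUnit_iff_degree_eq_zero.2 hd)
    obtain ⟨z, hz⟩ := hroot
    obtain ⟨i, hi⟩ := hm z
    have hmem : m i ∈ Ideal.span (Set.range m) := Ideal.subset_span ⟨i, rfl⟩
    rw [hg, Ideal.submodule_span_eq, Ideal.mem_span_singleton] at hmem
    obtain ⟨q, hq⟩ := hmem
    exact hi (by rw [hq, Polynomial.eval_mul, hz, zero_mul])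
  obtain ⟨c, hc⟩ := (Finsupp.mem_ideal_span_range_iff_exists_finsupp).1
    (htop ▸ Submodule.mem_top : (1 : Polynomial K) ∈ Ideal.span (Set.range m))
  refine ⟨c.sum fun i p => p * n i, fun z => ?_⟩
  have h1 := congrArg (fun p => p.eval z * f z) hc
  simp only [Finsupp.sum, Polynomial.eval_finsetSum, Polynomial.eval_mul, Polynomial.eval_one,
    one_mul, Finset.sum_mul] at h1 ⊢
  rw [← h1]
  exact Finset.sum_congr rfl fun i _ => by rw [mul_assoc, hf]

theorem exists_polynomial_solution {K ι : Type*} [Field K] [IsAlgClosed K]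
    {M N y : ι → Polynomial K}
    (hex : ∀ z, ∃ l m : K, ∀ i, (y i).eval z = l * (M i).eval z + m * (N i).eval z)
    (huniq : ∀ (z l m : K), (∀ i, l * (M i).eval z + m * (N i).eval z = 0) → l = 0 ∧ m = 0) :
    ∃ p q : Polynomial K, ∀ z i,
      (y i).eval z = p.eval z * (M i).eval z + q.eval z * (N i).eval z := by
  choose l m hlm using hex
  let minor : ι × ι → Polynomial K := fun ij => M ij.1 * N ij.2 - M ij.2 * N ij.1
  have hminor : ∀ z, ∃ ij, (minor ij).eval z ≠ 0 := by
    intro z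
    by_contra! h
    have h' : ∀ i j, (M i).eval z * (N j).eval z - (M j).eval z * (N i).eval z = 0 := fun i j => by
      simpa [minor] using h (i, j)
    have hN : ∀ i, (N i).eval z = 0 := fun i =>
      (huniq z ((N i).eval z) (-(M i).eval z) fun j => by linear_combination -h' i j).1
    exact one_ne_zero (huniq z 0 1 fun i => by simp [hN]).2
  obtain ⟨p, hp⟩ := exists_polynomial_of_mul_eq (m := minor) (f := l)
    (n := fun ij => y ij.1 * N ij.2 - y ij.2 * N ij.1)
    (fun ij z => by simp [minor, hlm z]; ring) hminor
  obtain ⟨q, hq⟩ := exists_polynomial_of_mul_eq (m := minor) (f := m)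
    (n := fun ij => M ij.1 * y ij.2 - M ij.2 * y ij.1)
    (fun ij z => by simp [minor, hlm z]; ring) hminor
  exact ⟨p, q, fun z i => by rw [← hp, ← hq, ← hlm]⟩

/-- A line bundle of negative degree on the projective line has no nonzero section. -/
theorem eq_zero_of_eval_inv {K : Type*} [Field K] [Infinite K] {p q : Polynomial K} {N : ℕ}
    (hN : 0 < N) (h : ∀ z, z ≠ 0 → q.eval z⁻¹ = -(z ^ N * p.eval z)) : p = 0 ∧ q = 0 := by
  have hpoly : q.reverse = -(Polynomial.X ^ (N + q.natDegree) * p) := by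
    refine Polynomial.eq_of_infinite_eval_eq _ _
      ((Set.finite_singleton (0 : K)).infinite_compl.mono fun z hz => ?_)
    have hz0 : z ≠ 0 := hz
    let := invertibleOfNonzero (inv_ne_zero hz0)
    have h1 := Polynomial.eval₂_reverse_mul_pow (RingHom.id K) z⁻¹ q
    rw [invOf_eq_inv, inv_inv, ← Polynomial.eval, ← Polynomial.eval, h z hz0, inv_pow] at h1
    simp only [Set.mem_ofPred_eq, Polynomial.eval_neg, Polynomial.eval_mul, Polynomial.eval_pow,
      Polynomial.eval_X]
    have hzn : z ^ q.natDegree ≠ 0 := pow_ne_zero _ hz0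
    rw [pow_add]
    field_simp at h1
    linear_combination h1
  have hp : p = 0 := by
    by_contra hp
    have h1 := Polynomial.reverse_natDegree_le q
    rw [hpoly, Polynomial.natDegree_neg, Polynomial.natDegree_mul (by simp) hp,
      Polynomial.natDegree_X_pow] at h1
    omega
  refine ⟨hp, ?_⟩
  rwa [hp, mul_zero, neg_zero, Polynomial.reverse_eq_zero] at hpoly

theorem eval_eq_of_logDeriv {K ι : Type*} [Field K] [IsAlgClosed K] [CharZero K]
    {m : ι → Polynomial K} (hm : ∀ z, ∃ i, (m i).eval z ≠ 0)
    (h : ∀ z, ∃ r : K, ∀ i, (m i).derivative.eval z = r * (m i).eval z) (i : ι) (z : K) :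
    (m i).eval z = (m i).eval 0 := by
  choose f hf using h
  obtain ⟨p, hp⟩ := exists_polynomial_of_mul_eq (m := m) (f := f)
    (n := fun i => (m i).derivative) (fun i z => by rw [hf, mul_comm]) hm
  have hd : (m i).derivative = p * m i := Polynomial.funext fun z => by
    rw [hf, hp, Polynomial.eval_mul]
  have hd0 : (m i).derivative = 0 := by
    by_contra h0
    have hmi : m i ≠ 0 := fun h => h0 (by simp [h])
    have hp0 : p ≠ 0 := fun h => h0 (by simp [hd, h])
    have := Polynomial.degree_derivative_lt hmi
    rw [hd, Polynomial.degree_mul, Polynomial.degree_eq_natDegree hmi,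
      Polynomial.degree_eq_natDegree hp0] at this
    norm_cast at this
    omega
  rw [Polynomial.eq_C_of_derivative_eq_zero hd0]
  simp

theorem MvPolynomial.IsHomogeneous.eval_smul_eq {R σ : Type*} [CommSemiring R] [Fintype σ]
    {φ : MvPolynomial σ R} {n : ℕ} (h : φ.IsHomogeneous n) (r : R) (x : σ → R) :
    eval (r • x) φ = r ^ n * eval x φ := by
  rw [eval_eq', eval_eq', Finset.mul_sum]
  refine Finset.sum_congr rfl fun d hd => ?_
  have hdeg : ∑ i, d i = n := by
    rw [h.degree_eq_sum_deg_support hd, ← Finsupp.degree_apply, Finsupp.degree_eq_sum]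
  simp only [Pi.smul_apply, smul_eq_mul, mul_pow, Finset.prod_mul_distrib,
    Finset.prod_pow_eq_pow_sum, hdeg]
  ring

theorem MvPolynomial.pderiv_comm {R σ : Type*} [CommRing R] (i j : σ) (φ : MvPolynomial σ R) :
    pderiv i (pderiv j φ) = pderiv j (pderiv i φ) := by
  have h : ⁅pderiv (R := R) i, pderiv (R := R) j⁆ = 0 := by
    classical
    refine derivation_ext fun k => ?_
    rw [Derivation.commutator_apply]
    simp only [pderiv_X, Derivation.zero_apply, Pi.single_apply]
    split_ifs <;> simp
  have := congrArg (· φ) h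
  simpa [Derivation.commutator_apply, sub_eq_zero] using this

/-- The contraction of a trilinear form `c` with two vectors. -/
def polar {R ι : Type*} [CommRing R] [Fintype ι] (c : ι → ι → ι → R) (u v : ι → R) : ι → R :=
  fun i => ∑ j, ∑ k, c i j k * u j * v k

theorem polar_comm {R ι : Type*} [CommRing R] [Fintype ι] {c : ι → ι → ι → R}
    (hc : ∀ i j k, c i j k = c i k j) (u v : ι → R) : polar c u v = polar c v u := by
  funext i
  rw [polar, polar, Finset.sum_comm]
  exact Finset.sum_congr rfl fun j _ => Finset.sum_congr rfl fun k _ => by rw [hc]; ring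

theorem polar_dotProduct_swap {R ι : Type*} [CommRing R] [Fintype ι] {c : ι → ι → ι → R}
    (hc : ∀ i j k, c i j k = c j i k) (u v w : ι → R) :
    polar c u v ⬝ᵥ w = polar c w v ⬝ᵥ u := by
  simp only [polar, dotProduct, Finset.sum_mul]
  rw [Finset.sum_comm]
  exact Finset.sum_congr rfl fun j _ => Finset.sum_congr rfl fun k _ =>
    Finset.sum_congr rfl fun l _ => by rw [hc]; ring

theorem polar_add_left {R ι : Type*} [CommRing R] [Fintype ι] (c : ι → ι → ι → R)
    (u u' v : ι → R) : polar c (u + u') v = polar c u v + polar c u' v := by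
  funext i
  simp [polar, mul_add, add_mul, Finset.sum_add_distrib]

theorem polar_add_right {R ι : Type*} [CommRing R] [Fintype ι] (c : ι → ι → ι → R)
    (u v v' : ι → R) : polar c u (v + v') = polar c u v + polar c u v' := by
  funext i
  simp [polar, mul_add, Finset.sum_add_distrib]

theorem polar_smul_left {R ι : Type*} [CommRing R] [Fintype ι] (c : ι → ι → ι → R)
    (r : R) (u v : ι → R) : polar c (r • u) v = r • polar c u v := by
  funext i
  simp only [polar, Pi.smul_apply, smul_eq_mul, Finset.mul_sum]
  exact Finset.sum_congr rfl fun j _ => Finset.sum_congr rfl fun k _ => by ring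

theorem polar_smul_right {R ι : Type*} [CommRing R] [Fintype ι] (c : ι → ι → ι → R)
    (r : R) (u v : ι → R) : polar c u (r • v) = r • polar c u v := by
  funext i
  simp only [polar, Pi.smul_apply, smul_eq_mul, Finset.mul_sum]
  exact Finset.sum_congr rfl fun j _ => Finset.sum_congr rfl fun k _ => by ring

theorem exists_symm_trilinear {K σ : Type*} [Field K] [CharZero K] [Fintype σ]
    {F : MvPolynomial σ K} (hF : F.IsHomogeneous 3) :
    ∃ c : σ → σ → σ → K, (∀ i j k, c i j k = c j i k) ∧ (∀ i j k, c i j k = c i k j) ∧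
      (∀ x, eval x F = polar c x x ⬝ᵥ x) ∧ ∀ x i, eval x (pderiv i F) = 3 * polar c x x i := by
  let c : σ → σ → σ → K := fun i j k =>
    6⁻¹ * eval 0 (pderiv k (pderiv j (pderiv i F)))
  have hconst : ∀ i j k x, eval x (pderiv k (pderiv j (pderiv i F))) = 6 * c i j k := by
    intro i j k x
    have h0 : (pderiv k (pderiv j (pderiv i F))).IsHomogeneous 0 := hF.pderiv.pderiv.pderiv
    rw [← totalDegree_zero_iff_isHomogeneous, totalDegree_eq_zero_iff_eq_C] at h0
    simp only [c]
    rw [h0]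
    simp
  have euler : ∀ (n : ℕ) (φ : MvPolynomial σ K), φ.IsHomogeneous n → ∀ x,
      n * eval x φ = ∑ i, x i * eval x (pderiv i φ) := by
    intro n φ hφ x
    have := congrArg (eval x) hφ.sum_X_mul_pderiv
    simpa using this.symm
  have hgrad : ∀ x i, eval x (pderiv i F) = 3 * polar c x x i := by
    intro x i
    have h2 := euler 2 (pderiv i F) hF.pderiv x
    have h1 : ∀ j, eval x (pderiv j (pderiv i F)) = ∑ k, x k * (6 * c i j k) := fun j => by
      have := euler 1 (pderiv j (pderiv i F)) hF.pderiv.pderiv x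
      simpa [hconst] using this
    simp only [h1, Finset.mul_sum] at h2
    have h3 : (2 : K) * (3 * polar c x x i) = ∑ j, ∑ k, x j * (x k * (6 * c i j k)) := by
      simp only [polar, Finset.mul_sum]
      exact Finset.sum_congr rfl fun j _ => Finset.sum_congr rfl fun k _ => by ring
    rw [← h3] at h2
    exact mul_left_cancel₀ two_ne_zero (by exact_mod_cast h2)
  refine ⟨c, ?_, ?_, ?_, hgrad⟩
  · intro i j k
    simp only [c, pderiv_comm j i]
  · intro i j k
    simp only [c, pderiv_comm k j]
  · intro x
    have h3 := euler 3 F hF x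
    simp only [hgrad] at h3
    refine mul_left_cancel₀ (three_ne_zero (α := K)) ?_
    rw [dotProduct, Finset.mul_sum]
    refine (by exact_mod_cast h3 : (3 : K) * eval x F = _).trans ?_
    exact Finset.sum_congr rfl fun j _ => by ring

theorem trilinear_derivative {K ι : Type*} [Field K] [Infinite K] [Fintype ι]
    (c : ι → ι → ι → K) {u v w : ι → Polynomial K}
    (h : ∀ z, polar c (fun i => (u i).eval z) (fun i => (v i).eval z) ⬝ᵥ
      (fun i => (w i).eval z) = 0) (z : K) :
    polar c (fun i => (u i).derivative.eval z) (fun i => (v i).eval z) ⬝ᵥ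
        (fun i => (w i).eval z) +
      polar c (fun i => (u i).eval z) (fun i => (v i).derivative.eval z) ⬝ᵥ
        (fun i => (w i).eval z) +
      polar c (fun i => (u i).eval z) (fun i => (v i).eval z) ⬝ᵥ
        (fun i => (w i).derivative.eval z) = 0 := by
  have hpoly : ∑ i, (∑ j, ∑ k, Polynomial.C (c i j k) * u j * v k) * w i = 0 :=
    Polynomial.funext fun z => by
      simpa [polar, dotProduct, Polynomial.eval_finsetSum] using h z
  have := congrArg (fun p => (Polynomial.derivative p).eval z) hpoly
  simp only [Polynomial.derivative_sum, Polynomial.derivative_mul, Polynomial.derivative_C,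
    Polynomial.eval_finsetSum, Polynomial.eval_add, Polynomial.eval_mul, Polynomial.eval_C,
    zero_mul, zero_add, Polynomial.derivative_zero, Polynomial.eval_zero,
    Finset.sum_add_distrib, add_mul] at this
  simpa only [polar, dotProduct] using this

/-- The value at `z` of a vector of polynomials. -/
def evalAt {K ι : Type*} [CommRing K] (a : ι → Polynomial K) (z : K) : ι → K :=
  fun i => (a i).eval z

/-- The vectors `a z`, `b z` span lines, on each of which the cubic form `c` vanishes without
being singular. -/
structure IsLineFamily {K : Type*} [Field K] (c : Fin 5 → Fin 5 → Fin 5 → K)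
    (a b : Fin 5 → Polynomial K) : Prop where
  linearIndependent : ∀ z, LinearIndependent K ![evalAt a z, evalAt b z]
  vanish : ∀ z x y : K, polar c (x • evalAt a z + y • evalAt b z)
    (x • evalAt a z + y • evalAt b z) ⬝ᵥ (x • evalAt a z + y • evalAt b z) = 0
  smooth : ∀ w : Fin 5 → K, w ≠ 0 → polar c w w ⬝ᵥ w = 0 → polar c w w ≠ 0

/-- `IsTangentCoord` for the derivative of a family of lines. -/
abbrev IsVelocity {K : Type*} [Field K] (c : Fin 5 → Fin 5 → Fin 5 → K)
    (a b : Fin 5 → Polynomial K) (z l m : K) : Prop :=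
  IsTangentCoord (evalAt a z) (evalAt b z) (polar c (evalAt a z) (evalAt a z))
    ((2 : K) • polar c (evalAt a z) (evalAt b z)) (polar c (evalAt b z) (evalAt b z))
    (evalAt (fun i => (a i).derivative) z) (evalAt (fun i => (b i).derivative) z) l m

section

variable {K : Type*} [Field K] [CharZero K] {c : Fin 5 → Fin 5 → Fin 5 → K}
  {a b : Fin 5 → Polynomial K}

theorem IsLineFamily.trilinear_eq_zero (h : IsLineFamily c a b)
    (hc : ∀ i j k, c i j k = c j i k) (hc' : ∀ i j k, c i j k = c i k j) (z : K) :
    polar c (evalAt a z) (evalAt a z) ⬝ᵥ evalAt a z = 0 ∧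
    polar c (evalAt a z) (evalAt a z) ⬝ᵥ evalAt b z = 0 ∧
    polar c (evalAt b z) (evalAt b z) ⬝ᵥ evalAt a z = 0 ∧
    polar c (evalAt b z) (evalAt b z) ⬝ᵥ evalAt b z = 0 := by
  have key : ∀ x y : K, x ^ 3 * polar c (evalAt a z) (evalAt a z) ⬝ᵥ evalAt a z +
      3 * x ^ 2 * y * polar c (evalAt a z) (evalAt a z) ⬝ᵥ evalAt b z +
      3 * x * y ^ 2 * polar c (evalAt b z) (evalAt b z) ⬝ᵥ evalAt a z +
      y ^ 3 * polar c (evalAt b z) (evalAt b z) ⬝ᵥ evalAt b z = 0 := by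
    intro x y
    have h1 := h.vanish z x y
    have hab := polar_comm hc' (evalAt b z) (evalAt a z)
    have haab : polar c (evalAt a z) (evalAt b z) ⬝ᵥ evalAt a z =
        polar c (evalAt a z) (evalAt a z) ⬝ᵥ evalAt b z := by
      rw [← hab, polar_dotProduct_swap hc]
    have habb := polar_dotProduct_swap hc (evalAt a z) (evalAt b z) (evalAt b z)
    simp only [polar_add_left, polar_add_right, polar_smul_left, polar_smul_right, hab,
      add_dotProduct, dotProduct_add, smul_dotProduct, dotProduct_smul, smul_eq_mul, haab,
      habb] at h1
    linear_combination h1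
  have h1 := key 1 0
  have h2 := key 0 1
  have h3 := key 1 1
  have h4 := key 1 (-1)
  refine ⟨by linear_combination h1, ?_, ?_, by linear_combination h2⟩
  · linear_combination (h3 - h4 - 2 * h2) / 6
  · linear_combination (h3 + h4 - 2 * h1) / 6

theorem IsLineFamily.isConormal (h : IsLineFamily c a b)
    (hc : ∀ i j k, c i j k = c j i k) (hc' : ∀ i j k, c i j k = c i k j) (z : K) :
    IsConormal (evalAt a z) (evalAt b z) (polar c (evalAt a z) (evalAt a z))
      ((2 : K) • polar c (evalAt a z) (evalAt b z)) (polar c (evalAt b z) (evalAt b z)) := by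
  obtain ⟨haaa, haab, hbba, hbbb⟩ := h.trilinear_eq_zero hc hc' z
  refine ⟨h.linearIndependent z, fun x y hxy => ?_, haaa, haab, ?_, ?_, hbba, hbbb⟩
  · have hw : polar c (x • evalAt a z + y • evalAt b z) (x • evalAt a z + y • evalAt b z) = 0 := by
      rw [← hxy]
      simp only [polar_add_left, polar_add_right, polar_smul_left, polar_smul_right,
        polar_comm hc' (evalAt b z) (evalAt a z)]
      module
    by_contra hne
    refine h.smooth _ (fun h0 => hne ?_) (h.vanish z x y) hw
    exact LinearIndependent.pair_iff.1 (h.linearIndependent z) x y h0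
  · rw [smul_dotProduct, polar_comm hc', polar_dotProduct_swap hc, haab, smul_zero]
  · rw [smul_dotProduct, polar_dotProduct_swap hc, hbba, smul_zero]

theorem IsLineFamily.exists_isVelocity [IsAlgClosed K] (h : IsLineFamily c a b)
    (hc : ∀ i j k, c i j k = c j i k) (hc' : ∀ i j k, c i j k = c i k j) (z : K) :
    ∃ l m, IsVelocity c a b z l m := by
  have ht := h.trilinear_eq_zero hc hc'
  have d₀ := trilinear_derivative c (fun z => (ht z).1) z
  have d₁ := trilinear_derivative c (fun z => (ht z).2.1) z
  have d₂ := trilinear_derivative c (fun z => (ht z).2.2.1) z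
  have d₃ := trilinear_derivative c (fun z => (ht z).2.2.2) z
  change polar c (evalAt (fun i => (a i).derivative) z) (evalAt a z) ⬝ᵥ evalAt a z +
    polar c (evalAt a z) (evalAt (fun i => (a i).derivative) z) ⬝ᵥ evalAt a z +
    polar c (evalAt a z) (evalAt a z) ⬝ᵥ (evalAt (fun i => (a i).derivative) z) = 0 at d₀
  change polar c (evalAt (fun i => (a i).derivative) z) (evalAt a z) ⬝ᵥ evalAt b z +
    polar c (evalAt a z) (evalAt (fun i => (a i).derivative) z) ⬝ᵥ evalAt b z +
    polar c (evalAt a z) (evalAt a z) ⬝ᵥ (evalAt (fun i => (b i).derivative) z) = 0 at d₁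
  change polar c (evalAt (fun i => (b i).derivative) z) (evalAt b z) ⬝ᵥ evalAt a z +
    polar c (evalAt b z) (evalAt (fun i => (b i).derivative) z) ⬝ᵥ evalAt a z +
    polar c (evalAt b z) (evalAt b z) ⬝ᵥ (evalAt (fun i => (a i).derivative) z) = 0 at d₂
  change polar c (evalAt (fun i => (b i).derivative) z) (evalAt b z) ⬝ᵥ evalAt b z +
    polar c (evalAt b z) (evalAt (fun i => (b i).derivative) z) ⬝ᵥ evalAt b z +
    polar c (evalAt b z) (evalAt b z) ⬝ᵥ (evalAt (fun i => (b i).derivative) z) = 0 at d₃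
  have hrot : ∀ u v w : Fin 5 → K, polar c u v ⬝ᵥ w = polar c v w ⬝ᵥ u := fun u v w => by
    rw [polar_dotProduct_swap hc, polar_comm hc']
  have hswap : ∀ u v w : Fin 5 → K, polar c u v ⬝ᵥ w = polar c v u ⬝ᵥ w := fun u v w => by
    rw [polar_comm hc']
  rw [hswap (evalAt a z) (evalAt _ z), hrot (evalAt _ z) (evalAt a z)] at d₀ d₁
  rw [hswap (evalAt b z) (evalAt _ z), hrot (evalAt _ z) (evalAt b z)] at d₂ d₃
  rw [hswap (evalAt b z) (evalAt a z)] at d₂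
  refine (h.isConormal hc hc' z).exists_isTangentCoord ?_ ?_ ?_ ?_
  · linear_combination d₀ / 3
  · rw [smul_dotProduct, smul_eq_mul]
    linear_combination d₁
  · rw [smul_dotProduct, smul_eq_mul]
    linear_combination d₂
  · linear_combination d₃ / 3

theorem polar_map {R S ι : Type*} [CommRing R] [CommRing S] [Fintype ι] (f : R →+* S)
    (c : ι → ι → ι → R) (u v : ι → R) :
    f ∘ polar c u v = polar (fun i j k => f (c i j k)) (f ∘ u) (f ∘ v) := by
  funext i
  simp [polar]

theorem map_wedge {R S ι : Type*} [CommRing R] [CommRing S] [Fintype ι] (f : R →+* S)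
    (A B u v : ι → R) : f (wedge A B u v) = wedge (f ∘ A) (f ∘ B) (f ∘ u) (f ∘ v) := by
  simp [wedge, RingHom.map_dotProduct]

theorem map_det_five {R S : Type*} [CommRing R] [CommRing S] (f : R →+* S)
    (p a b u v : Fin 5 → R) : f (Matrix.det ![p, a, b, u, v]) =
      Matrix.det ![f ∘ p, f ∘ a, f ∘ b, f ∘ u, f ∘ v] := by
  refine (RingHom.map_det f _).trans (congrArg Matrix.det ?_)
  funext i
  fin_cases i <;> rfl

theorem IsLineFamily.exists_polynomial_velocity [IsAlgClosed K] (h : IsLineFamily c a b)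
    (hc : ∀ i j k, c i j k = c j i k) (hc' : ∀ i j k, c i j k = c i k j) :
    ∃ p q : Polynomial K, ∀ z, IsVelocity c a b z (p.eval z) (q.eval z) := by
  let C' : (Fin 5 → K) → Fin 5 → Polynomial K := fun u => Polynomial.C ∘ u
  let pol := polar (fun i j k => Polynomial.C (c i j k))
  let y : ((Fin 5 → K) × (Fin 5 → K)) × Bool → Polynomial K := fun i =>
    bif i.2 then Matrix.det ![fun j => (a j).derivative, a, b, C' i.1.1, C' i.1.2]
    else -Matrix.det ![fun j => (b j).derivative, a, b, C' i.1.1, C' i.1.2]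
  let M : ((Fin 5 → K) × (Fin 5 → K)) × Bool → Polynomial K := fun i =>
    bif i.2 then wedge (pol b b) (pol a a) (C' i.1.1) (C' i.1.2)
    else wedge ((2 : Polynomial K) • pol a b) (pol b b) (C' i.1.1) (C' i.1.2)
  let N : ((Fin 5 → K) × (Fin 5 → K)) × Bool → Polynomial K := fun i =>
    bif i.2 then wedge (pol a a) ((2 : Polynomial K) • pol a b) (C' i.1.1) (C' i.1.2)
    else wedge (pol b b) (pol a a) (C' i.1.1) (C' i.1.2)
  have hC : ∀ z u, Polynomial.evalRingHom z ∘ C' u = u := fun z u => by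
    funext i
    simp [C']
  have hpol : ∀ z u v, Polynomial.evalRingHom z ∘ pol u v = polar c (evalAt u z) (evalAt v z) :=
    fun z u v => by
      rw [polar_map]
      simp only [Polynomial.coe_evalRingHom, Polynomial.eval_C]
      rfl
  have hpol2 : ∀ z u v, Polynomial.evalRingHom z ∘ ((2 : Polynomial K) • pol u v) =
      (2 : K) • polar c (evalAt u z) (evalAt v z) := fun z u v => by
    rw [← hpol]
    funext i
    simp
  have hdet : ∀ z (p u v), (Matrix.det ![p, a, b, C' u, C' v]).eval z =
      Matrix.det ![evalAt p z, evalAt a z, evalAt b z, u, v] := fun z p u v => by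
    rw [← Polynomial.coe_evalRingHom, map_det_five, hC, hC]
    rfl
  have hw : ∀ z (A B u v), (wedge A B (C' u) (C' v)).eval z =
      wedge (Polynomial.evalRingHom z ∘ A) (Polynomial.evalRingHom z ∘ B) u v :=
    fun z A B u v => by rw [← Polynomial.coe_evalRingHom, map_wedge, hC, hC]
  have key : ∀ z l m, IsVelocity c a b z l m ↔
      ∀ i, (y i).eval z = l * (M i).eval z + m * (N i).eval z := by
    intro z l m
    simp only [IsVelocity, IsTangentCoord, Prod.forall, Bool.forall_bool, y, M, N, cond_true,
      cond_false, Polynomial.eval_neg, hdet, hw, hpol, hpol2, neg_eq_iff_eq_neg]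
    exact forall₂_congr fun u v => and_comm
  obtain ⟨p, q, hpq⟩ := exists_polynomial_solution (M := M) (N := N) (y := y)
    (fun z => by
      obtain ⟨l, m, hlm⟩ := h.exists_isVelocity hc hc' z
      exact ⟨l, m, (key z l m).1 hlm⟩)
    (fun z l m h0 => by
      simp only [Prod.forall, Bool.forall_bool, M, N, cond_true,
        cond_false, hw, hpol, hpol2] at h0
      exact (h.isConormal hc hc' z).eq_zero (fun u v => (h0 u v).2) fun u v => (h0 u v).1)
  exact ⟨p, q, fun z => (key z _ _).2 (hpq z)⟩

theorem exists_minor_ne_zero {K ι : Type*} [Field K] {a b : ι → K}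
    (hab : LinearIndependent K ![a, b]) : ∃ i j, a i * b j - a j * b i ≠ 0 := by
  by_contra! h
  have ha : a ≠ 0 := hab.ne_zero 0
  obtain ⟨i, hi⟩ := Function.ne_iff.1 ha
  have hrel : b i • a + (-a i) • b = 0 := by
    funext j
    simp only [Pi.add_apply, Pi.smul_apply, smul_eq_mul, Pi.zero_apply]
    linear_combination -h i j
  exact hi (neg_eq_zero.1 (LinearIndependent.pair_iff.1 hab _ _ hrel).2)

/-- The line spanned by `a` and `b` is spanned by the columns of its matrix of Plücker
coordinates. -/
theorem span_pair_eq_span_minors {K ι : Type*} [Field K] {a b : ι → K}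
    (hab : LinearIndependent K ![a, b]) :
    Submodule.span K {a, b} = Submodule.span K (Set.range fun j i => a i * b j - a j * b i) := by
  refine le_antisymm (Submodule.span_le.2 ?_) (Submodule.span_le.2 ?_)
  · obtain ⟨i, j, hij⟩ := exists_minor_ne_zero hab
    have hcol : ∀ j, (fun i => a i * b j - a j * b i) ∈
        Submodule.span K (Set.range fun j i => a i * b j - a j * b i) :=
      fun j => Submodule.subset_span ⟨j, rfl⟩
    have hcomb : ∀ x y, x • (fun i => a i * b j - a j * b i) -
        y • (fun k => a k * b i - a i * b k) ∈
        Submodule.span K (Set.range fun j i => a i * b j - a j * b i) := fun x y =>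
      sub_mem (Submodule.smul_mem _ _ (hcol j)) (Submodule.smul_mem _ _ (hcol i))
    rintro w (rfl | rfl)
    · refine (Submodule.smul_mem_iff _ hij).1 ?_
      convert hcomb (w i) (w j) using 1
      funext k
      simp only [Pi.sub_apply, Pi.smul_apply, smul_eq_mul]
      ring
    · refine (Submodule.smul_mem_iff _ hij).1 ?_
      convert hcomb (w i) (w j) using 1
      funext k
      simp only [Pi.sub_apply, Pi.smul_apply, smul_eq_mul]
      ring
  · rintro _ ⟨j, rfl⟩
    refine Submodule.mem_span_pair.2 ⟨b j, -a j, ?_⟩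
    funext i
    simp only [Pi.add_apply, Pi.smul_apply, smul_eq_mul]
    ring

/-- A family of lines with zero velocity is constant. -/
theorem IsLineFamily.span_eq [IsAlgClosed K] (h : IsLineFamily c a b)
    (h0 : ∀ z, IsVelocity c a b z 0 0) (z : K) :
    Submodule.span K {evalAt a z, evalAt b z} = Submodule.span K {evalAt a 0, evalAt b 0} := by
  let m : Fin 5 × Fin 5 → Polynomial K := fun ij => a ij.1 * b ij.2 - a ij.2 * b ij.1
  have hm : ∀ ij z, (m ij).eval z = (m ij).eval 0 := by
    refine eval_eq_of_logDeriv (fun z => ?_) fun z => ?_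
    · obtain ⟨i, j, hij⟩ := exists_minor_ne_zero (h.linearIndependent z)
      exact ⟨(i, j), by simpa [m, evalAt] using hij⟩
    · obtain ⟨x, y, hP⟩ := exists_eq_of_det_eq_zero (h.linearIndependent z)
        fun u v => by simpa using (h0 z u v).1
      obtain ⟨x', y', hR⟩ := exists_eq_of_det_eq_zero (h.linearIndependent z)
        fun u v => by simpa using (h0 z u v).2
      refine ⟨x + y', fun ij => ?_⟩
      have hP' : ∀ i, (a i).derivative.eval z = x * (a i).eval z + y * (b i).eval z :=
        fun i => congrFun hP i
      have hR' : ∀ i, (b i).derivative.eval z = x' * (a i).eval z + y' * (b i).eval z :=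
        fun i => congrFun hR i
      simp only [m, Polynomial.derivative_sub, Polynomial.derivative_mul, Polynomial.eval_sub,
        Polynomial.eval_add, Polynomial.eval_mul, hP', hR']
      ring
  rw [span_pair_eq_span_minors (h.linearIndependent z),
    span_pair_eq_span_minors (h.linearIndependent 0)]
  congr 2
  funext j i
  simpa [m, evalAt] using hm (i, j) z

end

theorem derivative_eval_of_eval_inv {p q : Polynomial ℂ} {n : ℕ}
    (h : ∀ z, z ≠ 0 → p.eval z = z ^ n * q.eval z⁻¹) {z : ℂ} (hz : z ≠ 0) :
    p.derivative.eval z =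
      -(z ^ 2)⁻¹ * z ^ n * q.derivative.eval z⁻¹ + n * z ^ (n - 1) * q.eval z⁻¹ := by
  have h1 := (hasDerivAt_pow n z).mul ((q.hasDerivAt z⁻¹).comp z (hasDerivAt_inv hz))
  have h2 := h1.congr_of_eventuallyEq (f₁ := fun z => p.eval z)
    ((eventually_ne_nhds hz).mono fun w hw => by simpa using h w hw)
  rw [(p.hasDerivAt z).unique h2, Function.comp_apply]
  ring

section

variable {c : Fin 5 → Fin 5 → Fin 5 → ℂ} {a₀ b₀ a₁ b₁ : Fin 5 → Polynomial ℂ} {da db : ℕ}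

theorem IsVelocity.eval_inv (h : IsLineFamily c a₀ b₀)
    (hc : ∀ i j k, c i j k = c j i k) (hc' : ∀ i j k, c i j k = c i k j)
    (ha : ∀ z i, z ≠ 0 → (a₀ i).eval z = z ^ da * (a₁ i).eval z⁻¹)
    (hb : ∀ z i, z ≠ 0 → (b₀ i).eval z = z ^ db * (b₁ i).eval z⁻¹)
    {z l₀ m₀ l₁ m₁ : ℂ} (hz : z ≠ 0) (h₀ : IsVelocity c a₀ b₀ z l₀ m₀)
    (h₁ : IsVelocity c a₁ b₁ z⁻¹ l₁ m₁) :
    l₁ = -(z ^ (2 + db) * l₀) ∧ m₁ = -(z ^ (2 + da) * m₀) := by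
  have hx : z ^ da ≠ 0 := pow_ne_zero _ hz
  have hy : z ^ db ≠ 0 := pow_ne_zero _ hz
  have hA : evalAt a₀ z = z ^ da • evalAt a₁ z⁻¹ := funext fun i => ha z i hz
  have hB : evalAt b₀ z = z ^ db • evalAt b₁ z⁻¹ := funext fun i => hb z i hz
  have hA' : evalAt (fun i => (a₀ i).derivative) z =
      (-(z ^ 2)⁻¹ * z ^ da) • evalAt (fun i => (a₁ i).derivative) z⁻¹ +
        (da * z ^ (da - 1)) • evalAt a₁ z⁻¹ :=
    funext fun i => derivative_eval_of_eval_inv (fun z => ha z i) hz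
  have hB' : evalAt (fun i => (b₀ i).derivative) z =
      (-(z ^ 2)⁻¹ * z ^ db) • evalAt (fun i => (b₁ i).derivative) z⁻¹ +
        (db * z ^ (db - 1)) • evalAt b₁ z⁻¹ :=
    funext fun i => derivative_eval_of_eval_inv (fun z => hb z i) hz
  have h₂ : IsVelocity c a₀ b₀ z (-(z ^ 2)⁻¹ * l₁ / z ^ db) (-(z ^ 2)⁻¹ * m₁ / z ^ da) := by
    have := h₁.rescale (x := z ^ da) (y := z ^ db) (k := -(z ^ 2)⁻¹) (r := da * z ^ (da - 1))
      (s := db * z ^ (db - 1)) (mul_div_cancel₀ (-(z ^ 2)⁻¹ * l₁) hy)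
      (mul_div_cancel₀ (-(z ^ 2)⁻¹ * m₁) hx)
    rw [IsVelocity, hA', hB', hA, hB]
    convert this using 1 <;> simp only [polar_smul_left, polar_smul_right] <;> module
  obtain ⟨hl, hm⟩ := (h.isConormal hc hc' z).tangentCoord_unique h₀ h₂
  rw [hl, hm]
  constructor <;> field_simp <;> ring

theorem IsLineFamily.velocity_eq_zero (h₀ : IsLineFamily c a₀ b₀) (h₁ : IsLineFamily c a₁ b₁)
    (hc : ∀ i j k, c i j k = c j i k) (hc' : ∀ i j k, c i j k = c i k j)
    (ha : ∀ z i, z ≠ 0 → (a₀ i).eval z = z ^ da * (a₁ i).eval z⁻¹)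
    (hb : ∀ z i, z ≠ 0 → (b₀ i).eval z = z ^ db * (b₁ i).eval z⁻¹) :
    (∀ z, IsVelocity c a₀ b₀ z 0 0) ∧ ∀ z, IsVelocity c a₁ b₁ z 0 0 := by
  obtain ⟨p₀, q₀, hv₀⟩ := h₀.exists_polynomial_velocity hc hc'
  obtain ⟨p₁, q₁, hv₁⟩ := h₁.exists_polynomial_velocity hc hc'
  have key := fun z (hz : z ≠ 0) => IsVelocity.eval_inv h₀ hc hc' ha hb hz (hv₀ z) (hv₁ z⁻¹)
  obtain ⟨rfl, rfl⟩ := eq_zero_of_eval_inv (by lia) fun z hz => (key z hz).1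
  obtain ⟨rfl, rfl⟩ := eq_zero_of_eval_inv (by lia) fun z hz => (key z hz).2
  exact ⟨fun z => by simpa using hv₀ z, fun z => by simpa using hv₁ z⟩

end

theorem span_pair_smul {K V : Type*} [Field K] [AddCommGroup V] [Module K V] {x y : K}
    (hx : x ≠ 0) (hy : y ≠ 0) (a b : V) :
    Submodule.span K {x • a, y • b} = Submodule.span K {a, b} := by
  rw [Submodule.span_insert, Submodule.span_insert,
    Submodule.span_singleton_smul_eq hx.isUnit, Submodule.span_singleton_smul_eq hy.isUnit]

theorem isLineFamily_of_eval {F : MvPolynomial (Fin 5) ℂ}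
    (hsmooth : ∀ x : Fin 5 → ℂ, x ≠ 0 → eval x F = 0 → ∃ i, eval x (pderiv i F) ≠ 0)
    {c : Fin 5 → Fin 5 → Fin 5 → ℂ} (hF : ∀ x, eval x F = polar c x x ⬝ᵥ x)
    (hF' : ∀ x i, eval x (pderiv i F) = 3 * polar c x x i) {a b : Fin 5 → Polynomial ℂ}
    (hfam : ∀ z, LinearIndependent ℂ ![evalAt a z, evalAt b z] ∧
      ∀ v ∈ Submodule.span ℂ {evalAt a z, evalAt b z}, eval v F = 0) :
    IsLineFamily c a b := by
  refine ⟨fun z => (hfam z).1, fun z x y => ?_, fun w hw h0 hp => ?_⟩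
  · rw [← hF]
    exact (hfam z).2 _ (Submodule.mem_span_pair.2 ⟨x, y, rfl⟩)
  · obtain ⟨i, hi⟩ := hsmooth w hw ((hF w).trans h0)
    exact hi (by rw [hF', hp, Pi.zero_apply, mul_zero])

theorem eval_aeval_pair (φ : MvPolynomial (Fin 2) ℂ) (p q : Polynomial ℂ) (z : ℂ) :
    (aeval ![p, q] φ).eval z = eval ![p.eval z, q.eval z] φ := by
  have h := MvPolynomial.map_aeval ![p, q] (Polynomial.evalRingHom z) φ
  rw [Polynomial.coe_evalRingHom] at h
  rw [h]
  have hid : (Polynomial.evalRingHom z).comp (algebraMap ℂ (Polynomial ℂ)) = RingHom.id ℂ := by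
    ext x
    simp
  rw [hid]
  change eval₂ _ _ _ = eval₂ _ _ _
  congr 1
  funext i
  fin_cases i <;> rfl

end

/-- The Fano surface of a smooth cubic threefold contains no rational curves: every
algebraic family of lines of `X = V(F)` parametrized by `ℙ¹` is constant.  The family is
given by two vector-valued tuples of binary forms `a, b`, whose values at a point
`[s:t] ∈ ℙ¹` span a 2-dimensional subspace (a line of `ℙ⁴`) contained in `X`; the
conclusion is that this subspace does not depend on `[s:t]`. -/
theorem no_rational_curves_in_fano_surface
    (F : MvPolynomial (Fin 5) ℂ) (hF3 : F.IsHomogeneous 3)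
    (hsmooth : ∀ x : Fin 5 → ℂ, x ≠ 0 → eval x F = 0 →
      ∃ i, eval x (pderiv i F) ≠ 0)
    (da db : ℕ)
    (a b : Fin 5 → MvPolynomial (Fin 2) ℂ)
    (ha : ∀ i, (a i).IsHomogeneous da) (hb : ∀ i, (b i).IsHomogeneous db)
    (hfam : ∀ s t : ℂ, ¬ (s = 0 ∧ t = 0) →
      LinearIndependent ℂ
        ![(fun i => eval ![s, t] (a i) : Fin 5 → ℂ), fun i => eval ![s, t] (b i)] ∧
      ∀ v ∈ Submodule.span ℂ
          {(fun i => eval ![s, t] (a i) : Fin 5 → ℂ), fun i => eval ![s, t] (b i)},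
        eval v F = 0) :
    ∃ W : Submodule ℂ (Fin 5 → ℂ), ∀ s t : ℂ, ¬ (s = 0 ∧ t = 0) →
      Submodule.span ℂ
        {(fun i => eval ![s, t] (a i) : Fin 5 → ℂ), fun i => eval ![s, t] (b i)} = W := by
  obtain ⟨c, hc, hc', hF, hF'⟩ := exists_symm_trilinear hF3
  let chart₀ : (Fin 5 → MvPolynomial (Fin 2) ℂ) → Fin 5 → Polynomial ℂ :=
    fun a i => aeval ![1, Polynomial.X] (a i)
  let chart₁ : (Fin 5 → MvPolynomial (Fin 2) ℂ) → Fin 5 → Polynomial ℂ :=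
    fun a i => aeval ![Polynomial.X, 1] (a i)
  have e₀ : ∀ a i z, (chart₀ a i).eval z = eval ![1, z] (a i) := fun a i z => by
    simp [chart₀, eval_aeval_pair]
  have e₁ : ∀ a i z, (chart₁ a i).eval z = eval ![z, 1] (a i) := fun a i z => by
    simp [chart₁, eval_aeval_pair]
  have e₀' : ∀ a z, evalAt (chart₀ a) z = fun i => eval ![1, z] (a i) := fun a z =>
    funext fun i => e₀ a i z
  have e₁' : ∀ a z, evalAt (chart₁ a) z = fun i => eval ![z, 1] (a i) := fun a z =>
    funext fun i => e₁ a i z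
  have h₀ : IsLineFamily c (chart₀ a) (chart₀ b) := isLineFamily_of_eval hsmooth hF hF' fun z => by
    simpa only [e₀'] using hfam 1 z (by simp)
  have h₁ : IsLineFamily c (chart₁ a) (chart₁ b) := isLineFamily_of_eval hsmooth hF hF' fun z => by
    simpa only [e₁'] using hfam z 1 (by simp)
  have hglue : ∀ (d : ℕ) (a : Fin 5 → MvPolynomial (Fin 2) ℂ), (∀ i, (a i).IsHomogeneous d) →
      ∀ z i, z ≠ 0 → (chart₀ a i).eval z = z ^ d * (chart₁ a i).eval z⁻¹ := by
    intro d a ha z i hz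
    rw [e₀, e₁, ← (ha i).eval_smul_eq]
    simp [hz]
  obtain ⟨hv₀, hv₁⟩ := h₀.velocity_eq_zero h₁ hc hc' (hglue da a ha) (hglue db b hb)
  have hs₀ := h₀.span_eq hv₀
  have hs₁ := h₁.span_eq hv₁
  simp only [e₀'] at hs₀
  simp only [e₁'] at hs₁
  have hscale : ∀ r s t : ℂ, r ≠ 0 → Submodule.span ℂ
      {(fun i => eval ![r * s, r * t] (a i) : Fin 5 → ℂ), fun i => eval ![r * s, r * t] (b i)} =
      Submodule.span ℂ
        {(fun i => eval ![s, t] (a i) : Fin 5 → ℂ), fun i => eval ![s, t] (b i)} := by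
    intro r s t hr
    have hrst : ![r * s, r * t] = r • ![s, t] := by simp
    simp only [hrst, (ha _).eval_smul_eq, (hb _).eval_smul_eq]
    exact span_pair_smul (pow_ne_zero da hr) (pow_ne_zero db hr) _ _
  refine ⟨Submodule.span ℂ
    {(fun i => eval ![1, 0] (a i) : Fin 5 → ℂ), fun i => eval ![1, 0] (b i)}, fun s t hst => ?_⟩
  by_cases hs : s = 0
  · subst hs
    have ht : t ≠ 0 := fun ht => hst ⟨rfl, ht⟩
    have := hscale t 0 1 ht
    rw [mul_zero, mul_one] at this
    rw [this, ← hs₁ 1, hs₀ 1]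
  · have := hscale s 1 (t / s) hs
    rw [mul_one, mul_div_cancel₀ _ hs] at this
    rw [this, hs₀]
end
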